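/- arXiv:1501.01489 — 2 statements merged into one kernel-verified Lean document; each statement's English description precedes it below -/
import Mathlib

section
/- With high probability, the set Len_{3⌊n^{1/3}⌋} of chords of D_n of length at least 3⌊n^{1/3}⌋ is strongly connected as a subdiagram of the random oriented chord diagram D_n: for any two chords c, d of length at least 3⌊n^{1/3}⌋ there is a directed path from c to d in the directed intersection graph of D_n using only chords of length at least 3⌊n^{1/3}⌋. -/
open scoped Classical
open Finset Filter

/-- A chord diagram of size `n`: a fixed-point-free involution of the `2n`
endpoints `0, 1, …, 2n-1` (endpoint `i` here corresponds to the label `i+1`). -/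
abbrev ChordDiagram (n : ℕ) :=
  {f : Fin (2*n) → Fin (2*n) // (∀ i, f (f i) = i) ∧ ∀ i, f i ≠ i}

/-- `c` lies strictly between `a` and `b`. -/
def Between {m : ℕ} (a b c : Fin m) : Prop := min a b < c ∧ c < max a b

/-- The chord of `C` containing endpoint `x` crosses the chord containing endpoint `u`:
exactly one of the two endpoints `u`, `C u` lies strictly between `x` and `C x`. -/
def Crosses {n : ℕ} (C : ChordDiagram n) (x u : Fin (2*n)) : Prop :=
  Xor' (Between x (C.1 x) u) (Between x (C.1 x) (C.1 u))

/-- Uniform probability of an event over all chord diagrams of size `n`. -/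
noncomputable def prob (n : ℕ) (E : ChordDiagram n → Prop) : ℝ :=
  ((Finset.univ.filter E).card : ℝ) / ((Finset.univ : Finset (ChordDiagram n)).card : ℝ)

/-- The degree of the chord of `C` containing endpoint `x`: the number of chords
crossing it (each chord counted once via its smaller endpoint). -/
noncomputable def chordDegree {n : ℕ} (C : ChordDiagram n) (x : Fin (2*n)) : ℕ :=
  (Finset.univ.filter fun u => u < C.1 u ∧ Crosses C x u).card

/-- The length of the chord of `C` containing endpoint `x`: the number of endpoints
on the smaller of the two arcs it determines. -/
def chordLength {n : ℕ} (C : ChordDiagram n) (x : Fin (2*n)) : ℕ :=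
  min (max (x:ℕ) (C.1 x : ℕ) - min (x:ℕ) (C.1 x : ℕ) - 1)
      (2*n - (max (x:ℕ) (C.1 x : ℕ) - min (x:ℕ) (C.1 x : ℕ)) - 1)

/-- Degree of the chord containing endpoint `1` (index `0`). -/
noncomputable def degreeC1 (n : ℕ) (C : ChordDiagram n) : ℕ :=
  if h : 0 < n then chordDegree C ⟨0, by omega⟩ else 0

/-- Length of the chord containing endpoint `1` (index `0`). -/
noncomputable def lengthC1 (n : ℕ) (C : ChordDiagram n) : ℕ :=
  if h : 0 < n then chordLength C ⟨0, by omega⟩ else 0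

/-- Membership in the component (w.r.t. the crossing relation) of the chord
containing the root endpoint. -/
def InRootComponent {n : ℕ} (C : ChordDiagram n) (root x : Fin (2*n)) : Prop :=
  x = root ∨ x = C.1 root ∨ Relation.ReflTransGen (fun a b => Crosses C a b) root x

/-- The chord containing `x` is simple: it joins two (cyclically) consecutive endpoints. -/
def IsSimple {n : ℕ} (C : ChordDiagram n) (x : Fin (2*n)) : Prop :=
  (C.1 x : ℕ) = ((x : ℕ) + 1) % (2*n) ∨ (x : ℕ) = ((C.1 x : ℕ) + 1) % (2*n)

/-- `C` is monolithic (with respect to `root`): every chord not in the root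
component is simple, and no two simple chords are next to each other. -/
def Monolithic {n : ℕ} (C : ChordDiagram n) (root : Fin (2*n)) : Prop :=
  (∀ x : Fin (2*n), ¬ InRootComponent C root x → IsSimple C x) ∧
  ¬ ∃ i : Fin (2*n), (C.1 i : ℕ) = ((i : ℕ) + 1) % (2*n) ∧
      ∃ j : Fin (2*n), (j : ℕ) = ((i : ℕ) + 2) % (2*n) ∧ (C.1 j : ℕ) = ((i : ℕ) + 3) % (2*n)

/-- `L_j`: the number of chords of length `j` in `C`. -/
noncomputable def lengthCount (n : ℕ) (j : ℕ) (C : ChordDiagram n) : ℕ :=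
  (Finset.univ.filter fun x : Fin (2*n) => x < C.1 x ∧ chordLength C x = j).card

/-- The endpoints of chords of `C` of length at least `k`. -/
noncomputable def lenAtLeast (n k : ℕ) (C : ChordDiagram n) : Finset (Fin (2*n)) :=
  Finset.univ.filter fun x => k ≤ chordLength C x

/-- The number of chords with endpoints in `S` crossing the chord containing `x`. -/
noncomputable def degreeIn {n : ℕ} (C : ChordDiagram n) (S : Finset (Fin (2*n)))
    (x : Fin (2*n)) : ℕ :=
  (S.filter fun u => u < C.1 u ∧ Crosses C x u).card

/-- `S` (a chord-closed set of endpoints) is a set of chords each crossing at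
least `k` other chords of `S`. -/
def IsCore {n : ℕ} (C : ChordDiagram n) (k : ℕ) (S : Finset (Fin (2*n))) : Prop :=
  (∀ x ∈ S, C.1 x ∈ S) ∧ ∀ x ∈ S, k ≤ degreeIn C S x

/-- The `k`-core: the union of all sets of chords in which every chord crosses
at least `k` other chords of the set. -/
noncomputable def kCore (n k : ℕ) (C : ChordDiagram n) : Finset (Fin (2*n)) :=
  Finset.univ.filter fun x => ∃ S : Finset (Fin (2*n)), IsCore C k S ∧ x ∈ S

/-- The number of chords in the `k`-core of `C`. -/
noncomputable def kCoreSize (n k : ℕ) (C : ChordDiagram n) : ℕ :=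
  ((kCore n k C).filter fun x => x < C.1 x).card

/-- `Z_k`: the number of chords of length strictly less than `k`. -/
noncomputable def shortCount (n k : ℕ) (C : ChordDiagram n) : ℕ :=
  (Finset.univ.filter fun x : Fin (2*n) => x < C.1 x ∧ chordLength C x < k).card

/-- `C` contains a balanced clique of size `m`: a set of `m` pairwise crossing
chords with exactly one endpoint in each of the `2m` blocks of length `⌊n/m⌋`. -/
def HasBalancedClique (n m : ℕ) (C : ChordDiagram n) : Prop :=
  ∃ S : Finset (Fin (2*n)),
    (∀ x ∈ S, C.1 x ∈ S) ∧
    (∀ x ∈ S, ∀ u ∈ S, u ≠ x → u ≠ C.1 x → Crosses C x u) ∧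
    (∀ t : ℕ, 1 ≤ t → t ≤ 2*m →
      (S.filter fun x => (t-1) * (n/m) ≤ (x:ℕ) ∧ (x:ℕ) < t * (n/m)).card = 1)

/-- An oriented chord diagram: a chord diagram together with auxiliary fair-coin
bits; the bit attached to a crossing pair of chords (indexed by their smaller
endpoints) decides which chord over-crosses the other. -/
abbrev OrientedChordDiagram (n : ℕ) := ChordDiagram n × (Fin (2*n) → Fin (2*n) → Bool)

/-- The smaller endpoint of the chord of `C` containing `x`. -/
def chordRep {n : ℕ} (C : ChordDiagram n) (x : Fin (2*n)) : Fin (2*n) := min x (C.1 x)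

/-- In the oriented diagram `D`, the chord containing `x` crosses and
over-crosses the chord containing `u`. -/
def OverD {n : ℕ} (D : OrientedChordDiagram n) (x u : Fin (2*n)) : Prop :=
  Crosses D.1 x u ∧
    ((chordRep D.1 x ≤ chordRep D.1 u ∧ D.2 (chordRep D.1 x) (chordRep D.1 u) = true) ∨
     (chordRep D.1 u < chordRep D.1 x ∧ D.2 (chordRep D.1 u) (chordRep D.1 x) = false))

/-- Uniform probability of an event over all oriented chord diagrams of size `n`
(this yields a uniformly random diagram with each crossing oriented by an
independent fair coin). -/
noncomputable def probD (n : ℕ) (E : OrientedChordDiagram n → Prop) : ℝ :=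
  ((Finset.univ.filter E).card : ℝ) /
    ((Finset.univ : Finset (OrientedChordDiagram n)).card : ℝ)

/-- The chords (given by their endpoints in `S`) are strongly connected in the
directed intersection graph of `D`, using only chords of `S`. -/
def StronglyConnectedIn {n : ℕ} (D : OrientedChordDiagram n) (S : Set (Fin (2*n))) : Prop :=
  ∀ c ∈ S, ∀ d ∈ S,
    Relation.ReflTransGen (fun a b => a ∈ S ∧ b ∈ S ∧ OverD D a b) c d

/-- The number of chords with both endpoints in the cyclic block
`{i, i+1, …, i+t-1}` (mod `2n`). -/
noncomputable def chordsInBlock (n : ℕ) (C : ChordDiagram n) (i t : ℕ) : ℕ :=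
  (Finset.univ.filter fun x : Fin (2*n) => x < C.1 x ∧
    (∃ a < t, (x:ℕ) = (i + a) % (2*n)) ∧ (∃ a < t, ((C.1 x : ℕ)) = (i + a) % (2*n))).card

/-- The chord of `x` reaches the chord of `u` in the directed intersection graph
(of the whole diagram); endpoints of the same chord represent the same vertex. -/
def ReachChord {n : ℕ} (D : OrientedChordDiagram n) (x u : Fin (2*n)) : Prop :=
  u = x ∨ u = D.1.1 x ∨ Relation.ReflTransGen (fun a b => OverD D a b) x u

/-- The chords of `x` and `u` lie in the same strong component. -/
def MutualReach {n : ℕ} (D : OrientedChordDiagram n) (x u : Fin (2*n)) : Prop :=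
  ReachChord D x u ∧ ReachChord D u x

/-- The number of single-chord strong components of `D`. -/
noncomputable def singleCount (n : ℕ) (D : OrientedChordDiagram n) : ℕ :=
  (Finset.univ.filter fun x : Fin (2*n) =>
    x < D.1.1 x ∧ ∀ u : Fin (2*n), u ≠ x → u ≠ D.1.1 x → ¬ MutualReach D x u).card


section Count
variable {α : Type*} [Fintype α]

/-- Involutions with support exactly `V`, i.e. perfect matchings of `V`. -/
noncomputable def IM (V : Finset α) : Finset (Equiv.Perm α) :=
  Finset.univ.filter fun f => (∀ i, f (f i) = i) ∧ ∀ i, f i ≠ i ↔ i ∈ V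

lemma mem_IM (V : Finset α) (f : Equiv.Perm α) :
    f ∈ IM V ↔ (∀ i, f (f i) = i) ∧ ∀ i, f i ≠ i ↔ i ∈ V := by
  simp [IM]

lemma IM_swap {V : Finset α} {x y : α} (hxy : x ≠ y) {f : Equiv.Perm α}
    (hf : f ∈ IM V) (hfx : f x = y) : f * Equiv.swap x y ∈ IM ((V.erase x).erase y) := by
  rw [mem_IM] at hf ⊢
  obtain ⟨h1, h2⟩ := hf
  have hfy : f y = x := by rw [← hfx, h1]
  have key : ∀ i, i ≠ x → i ≠ y → f i ≠ x ∧ f i ≠ y := by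
    intro i hx hy
    refine ⟨fun h => hy ?_, fun h => hx ?_⟩
    · rw [← h1 i, h, hfx]
    · rw [← h1 i, h, hfy]
  refine ⟨fun i => ?_, fun i => ?_⟩
  · by_cases hx : i = x
    · subst hx; simp [hfy]
    by_cases hy : i = y
    · subst hy; simp [hfx]
    obtain ⟨h3, h4⟩ := key i hx hy
    simp [Equiv.swap_apply_of_ne_of_ne hx hy, Equiv.swap_apply_of_ne_of_ne h3 h4, h1]
  · by_cases hx : i = x
    · subst hx; simp [hfy]
    by_cases hy : i = y
    · subst hy; simp [hfx]
    simp [Equiv.swap_apply_of_ne_of_ne hx hy, hx, hy, ← h2]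

lemma IM_swap' {V : Finset α} {x y : α} (hxy : x ≠ y) (hx : x ∈ V) (hy : y ∈ V)
    {f : Equiv.Perm α}
    (hf : f ∈ IM ((V.erase x).erase y)) :
    f * Equiv.swap x y ∈ IM V ∧ (f * Equiv.swap x y) x = y := by
  rw [mem_IM] at hf
  rw [mem_IM]
  obtain ⟨h1, h2⟩ := hf
  have hfx : f x = x := by
    by_contra h
    simpa using (h2 x).1 h
  have hfy : f y = y := by
    by_contra h
    simpa using (h2 y).1 h
  have key : ∀ i, i ≠ x → i ≠ y → f i ≠ x ∧ f i ≠ y := by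
    intro i hx hy
    refine ⟨fun h => hx ?_, fun h => hy ?_⟩
    · rw [← h1 i, h, hfx]
    · rw [← h1 i, h, hfy]
  refine ⟨⟨fun i => ?_, fun i => ?_⟩, by simp [hfy]⟩
  · by_cases hx : i = x
    · subst hx; simp [hfy, hfx]
    by_cases hy : i = y
    · subst hy; simp [hfx, hfy]
    obtain ⟨h3, h4⟩ := key i hx hy
    simp [Equiv.swap_apply_of_ne_of_ne hx hy, Equiv.swap_apply_of_ne_of_ne h3 h4, h1]
  · by_cases hx : i = x
    · subst hx; simp [hfy, hxy.symm, *]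
    by_cases hy : i = y
    · subst hy; simp [hfx, hxy, *]
    have := h2 i
    simp only [Finset.mem_erase, ne_eq, hx, hy, not_false_eq_true, true_and] at this
    simp [Equiv.swap_apply_of_ne_of_ne hx hy, ← this]

/-- number of perfect matchings of a `k`-set -/
def nuM : ℕ → ℕ
  | 0 => 1
  | 1 => 0
  | (k+2) => (k+1) * nuM k

lemma IM_fiber (V : Finset α) {x y : α} (hxy : x ≠ y) (hx : x ∈ V) (hy : y ∈ V) :
    ((IM V).filter fun f => f x = y).card = (IM ((V.erase x).erase y)).card := by
  refine Finset.card_bij' (fun f _ => f * Equiv.swap x y) (fun f _ => f * Equiv.swap x y)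
    ?_ ?_ ?_ ?_
  · intro f hf
    rw [Finset.mem_filter] at hf
    exact IM_swap hxy hf.1 hf.2
  · intro f hf
    rw [Finset.mem_filter]
    exact IM_swap' hxy hx hy hf
  · intro f _
    simp [mul_assoc]
  · intro f _
    simp [mul_assoc]

lemma card_IM (k : ℕ) : ∀ V : Finset α, V.card = k → (IM V).card = nuM k := by
  induction k using Nat.strong_induction_on with
  | _ k ih =>
  intro V hV
  match k, ih, hV with
  | 0, _, hV =>
    rw [Finset.card_eq_zero] at hV
    subst hV
    have : IM (∅ : Finset α) = {1} := by
      ext f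
      rw [mem_IM, Finset.mem_singleton]
      constructor
      · rintro ⟨_, h⟩
        ext i
        have := h i
        simpa using this
      · rintro rfl
        simp
    rw [this]; simp [nuM]
  | 1, _, hV =>
    rw [Finset.card_eq_one] at hV
    obtain ⟨a, rfl⟩ := hV
    simp only [nuM, Finset.card_eq_zero]
    rw [Finset.eq_empty_iff_forall_notMem]
    intro f hf
    rw [mem_IM] at hf
    have h1 := (hf.2 a).2 (by simp)
    have h2 := (hf.2 (f a)).1 (by rw [hf.1]; exact h1.symm)
    simp at h2
    exact h1 h2
  | (k+2), ih, hV =>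
    have hne : V.Nonempty := by
      rw [← Finset.card_pos]; omega
    obtain ⟨x, hx⟩ := hne
    have h1 : (IM V).card = ∑ y ∈ V.erase x, ((IM V).filter fun f => f x = y).card := by
      apply Finset.card_eq_sum_card_fiberwise
      intro f hf
      have hf := (mem_IM V f).1 hf
      have h3 := (hf.2 x).2 hx
      have h4 := (hf.2 (f x)).1 (by rw [hf.1]; exact h3.symm)
      simp [h3, h4]
    rw [h1, nuM]
    rw [Finset.sum_congr rfl (g := fun _ => nuM k)]
    · simp [Finset.card_erase_of_mem hx, hV]
    · intro y hy
      have hy' := Finset.mem_erase.1 hy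
      rw [IM_fiber V hy'.1.symm hx hy'.2]
      apply ih k (by omega)
      rw [Finset.card_erase_of_mem hy, Finset.card_erase_of_mem hx, hV]
      omega

lemma card_bad (q : ℝ) (hq0 : 0 ≤ q) (N : ℕ) (Y : Finset α) (hY : (1 - q) * N ≤ Y.card) (hq1 : q ≤ 1)
    (k : ℕ) : ∀ V X : Finset α, V.card ≤ N → X ⊆ V → Y ⊆ V → Disjoint X Y → 2 * k ≤ X.card →
      (((IM V).filter fun f => ∀ x ∈ X, f x ∉ Y).card : ℝ) ≤ q ^ k * nuM V.card := by
  induction k with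
  | zero =>
    intro V X hV _ _ _ _
    rw [pow_zero, one_mul, ← card_IM _ V rfl]
    exact_mod_cast Finset.card_filter_le _ _
  | succ k ih =>
    intro V X hV hXV hYV hXY hX
    have hne : X.Nonempty := by
      rw [← Finset.card_pos]; omega
    obtain ⟨x, hx⟩ := hne
    have hxV := hXV hx
    have hxY : x ∉ Y := fun h => (Finset.disjoint_left.1 hXY hx h)
    have hVc : 2 ≤ V.card := by
      have := Finset.card_le_card hXV
      omega
    obtain ⟨v, hv⟩ : ∃ v, V.card = v + 2 := ⟨V.card - 2, by omega⟩
    have h1 : ((IM V).filter fun f => ∀ x ∈ X, f x ∉ Y).card =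
        ∑ y ∈ (V.erase x) \ Y, (((IM V).filter fun f => ∀ x ∈ X, f x ∉ Y).filter fun f => f x = y).card := by
      apply Finset.card_eq_sum_card_fiberwise
      intro f hf
      have hf := Finset.mem_filter.1 hf
      have hf' := (mem_IM V f).1 hf.1
      have h3 := (hf'.2 x).2 hxV
      have h4 := (hf'.2 (f x)).1 (by rw [hf'.1]; exact h3.symm)
      simp [h3, h4, hf.2 x hx]
    rw [h1]
    push_cast
    have hcard : (((V.erase x) \ Y).card : ℝ) = (v + 1) - Y.card := by
      have hsub : Y ⊆ V.erase x := fun y hy => Finset.mem_erase.2 ⟨fun h => hxY (h ▸ hy), hYV hy⟩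
      have h5 := Finset.card_sdiff_of_subset hsub
      have h6 := Finset.card_le_card hsub
      rw [Finset.card_erase_of_mem hxV, hv] at h5 h6
      rw [h5, Nat.cast_sub h6]
      push_cast
      ring
    have hb : ∀ y ∈ (V.erase x) \ Y, (((((IM V).filter fun f => ∀ x ∈ X, f x ∉ Y).filter fun f => f x = y).card : ℕ) : ℝ)
        ≤ q ^ k * nuM v := by
      intro y hy
      rw [Finset.mem_sdiff] at hy
      obtain ⟨hy1, hyY⟩ := hy
      have hy2 := Finset.mem_erase.1 hy1
      have hVc' : ((V.erase x).erase y).card = v := by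
        rw [Finset.card_erase_of_mem hy1, Finset.card_erase_of_mem hxV, hv]; omega
      have := ih ((V.erase x).erase y) ((X.erase x).erase y) (by omega)
        (Finset.erase_subset_erase _ (Finset.erase_subset_erase _ hXV))
        (fun z hz => by
          rw [Finset.mem_erase, Finset.mem_erase]
          exact ⟨fun h => hyY (h ▸ hz), fun h => hxY (h ▸ hz), hYV hz⟩)
        (hXY.mono_left ((Finset.erase_subset _ _).trans (Finset.erase_subset _ _)))
        (by
          have e1 := Finset.card_erase_of_mem hx
          have e2 := Finset.pred_card_le_card_erase (s := X.erase x) (a := y)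
          omega)
      rw [hVc'] at this
      refine le_trans ?_ this
      have : (((IM V).filter fun f => ∀ x ∈ X, f x ∉ Y).filter fun f => f x = y).card ≤
        ((IM ((V.erase x).erase y)).filter fun f => ∀ z ∈ (X.erase x).erase y, f z ∉ Y).card := by
        apply Finset.card_le_card_of_injOn (fun f => f * Equiv.swap x y)
        · intro f hf
          have hf := Finset.mem_filter.1 hf
          have hf1 := Finset.mem_filter.1 hf.1
          rw [Finset.mem_coe, Finset.mem_filter]
          refine ⟨IM_swap hy2.1.symm hf1.1 hf.2, ?_⟩
          intro z hz
          rw [Finset.mem_erase, Finset.mem_erase] at hz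
          simp only [Equiv.Perm.coe_mul, Function.comp_apply]
          rw [Equiv.swap_apply_of_ne_of_ne hz.2.1 hz.1]
          exact hf1.2 z hz.2.2
        · intro f _ g _ h
          exact mul_right_cancel h
      exact_mod_cast this
    have h7 := Finset.sum_le_sum hb
    rw [Finset.sum_const, nsmul_eq_mul, hcard] at h7
    refine h7.trans ?_
    rw [hv, nuM, pow_succ]
    have h8 : ((v:ℝ) + 1) - Y.card ≤ q * (v + 1) := by
      have : ((v : ℝ) + 1) ≤ N := by
        have : v + 1 ≤ N := by omega
        exact_mod_cast this
      nlinarith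
    have h9 : 0 ≤ q ^ k * (nuM v : ℝ) := by positivity
    push_cast
    nlinarith

lemma card_bad' (q : ℝ) (hq0 : 0 ≤ q) (N : ℕ) (Y : Finset α) (hY : (1 - q) * N ≤ Y.card) (hq1 : q ≤ 1)
    (k : ℕ) (V X : Finset α) [DecidablePred fun f : Equiv.Perm α => ∀ x ∈ X, f x ∉ Y]
    (h1 : V.card ≤ N) (h2 : X ⊆ V) (h3 : Y ⊆ V) (h4 : Disjoint X Y) (h5 : 2 * k ≤ X.card) :
      (((IM V).filter fun f => ∀ x ∈ X, f x ∉ Y).card : ℝ) ≤ q ^ k * nuM V.card := by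
  convert card_bad q hq0 N Y hY hq1 k V X h1 h2 h3 h4 h5

end Count

section Coins
variable {ι κ : Type*} [Fintype ι] [DecidableEq ι]

lemma coin_bound (e f : κ → ι) (s t : κ → Bool) (H : Finset κ)
    (hst : ∀ h ∈ H, e h = f h → s h = t h)
    (hd : ∀ h ∈ H, ∀ h' ∈ H, h ≠ h' → e h ≠ e h' ∧ e h ≠ f h' ∧ f h ≠ f h') :
    (((Finset.univ : Finset (ι → Bool)).filter
      fun ω => ∀ h ∈ H, ¬ (ω (e h) = s h ∧ ω (f h) = t h)).card : ℝ) ≤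
      (3/4 : ℝ) ^ H.card * Fintype.card (ι → Bool) := by
  induction H using Finset.induction_on with
  | empty => simp
  | insert a H ha ih =>
    have ih' := ih (fun h hh => hst h (Finset.mem_insert_of_mem hh))
      (fun h hh h' hh' => hd h (Finset.mem_insert_of_mem hh) h' (Finset.mem_insert_of_mem hh'))
    set G := (Finset.univ : Finset (ι → Bool)).filter
      fun ω => ∀ h ∈ H, ¬ (ω (e h) = s h ∧ ω (f h) = t h) with hG
    set G' := (Finset.univ : Finset (ι → Bool)).filter
      fun ω => ∀ h ∈ insert a H, ¬ (ω (e h) = s h ∧ ω (f h) = t h) with hG'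
    have hsub : G' ⊆ G := by
      intro ω
      simp only [hG, hG', Finset.mem_filter, Finset.mem_univ, true_and]
      exact fun h x hx => h x (Finset.mem_insert_of_mem hx)
    let φ : (ι → Bool) → (ι → Bool) := fun ω => Function.update (Function.update ω (e a) (s a)) (f a) (t a)
    have hφe : ∀ ω, φ ω (e a) = s a := by
      intro ω
      by_cases h : e a = f a
      · simp only [φ]; rw [h, Function.update_self, hst a (Finset.mem_insert_self _ _) h]
      · simp only [φ]; rw [Function.update_of_ne h, Function.update_self]
    have hφf : ∀ ω, φ ω (f a) = t a := fun ω => by simp [φ]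
    have hφo : ∀ ω i, i ≠ e a → i ≠ f a → φ ω i = ω i := by
      intro ω i h1 h2
      simp [φ, h1, h2]
    have himg : G.image φ ⊆ G \ G' := by
      intro ω' hω'
      obtain ⟨ω, hω, rfl⟩ := Finset.mem_image.1 hω'
      rw [Finset.mem_sdiff]
      constructor
      · simp only [hG, Finset.mem_filter, Finset.mem_univ, true_and] at hω ⊢
        intro h hh
        have hne : a ≠ h := fun h' => ha (h' ▸ hh)
        have h1 := hd a (Finset.mem_insert_self _ _) h (Finset.mem_insert_of_mem hh) hne
        have h2 := hd h (Finset.mem_insert_of_mem hh) a (Finset.mem_insert_self _ _) hne.symm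
        rw [hφo _ _ h1.1.symm h2.2.1, hφo _ _ h1.2.1.symm h1.2.2.symm]
        exact hω h hh
      · simp only [hG', Finset.mem_filter, Finset.mem_univ, true_and, not_forall]
        exact ⟨a, Finset.mem_insert_self _ _, fun h => h ⟨hφe ω, hφf ω⟩⟩
    have hfib : G.card ≤ 4 * (G.image φ).card := by
      apply Finset.card_le_mul_card_image
      intro ω' _
      have : (G.filter fun ω => φ ω = ω').card ≤ (Finset.univ : Finset (Bool × Bool)).card := by
        apply Finset.card_le_card_of_injOn (fun ω => (ω (e a), ω (f a)))
        · intro _ _; simp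
        · intro ω₁ h₁ ω₂ h₂ h
          have h₁ := (Finset.mem_filter.1 h₁).2
          have h₂ := (Finset.mem_filter.1 h₂).2
          simp only [Prod.mk.injEq] at h
          funext i
          by_cases hi : i = e a
          · rw [hi]; exact h.1
          by_cases hi' : i = f a
          · rw [hi']; exact h.2
          rw [← hφo ω₁ i hi hi', ← hφo ω₂ i hi hi', h₁, h₂]
      simpa using this
    have h1 := Finset.card_le_card himg
    have h2 := Finset.card_sdiff_add_card_eq_card hsub
    have h3 : 4 * G'.card ≤ 3 * G.card := by omega
    have h4 : (4 : ℝ) * G'.card ≤ 3 * G.card := by exact_mod_cast h3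
    rw [Finset.card_insert_of_notMem ha, pow_succ]
    linarith
end Coins

lemma coin_bound' {A κ : Type*} [Fintype A] [DecidableEq A] (e f : κ → A × A) (s t : κ → Bool) (H : Finset κ)
    (hst : ∀ h ∈ H, e h = f h → s h = t h)
    (hd : ∀ h ∈ H, ∀ h' ∈ H, h ≠ h' → e h ≠ e h' ∧ e h ≠ f h' ∧ f h ≠ f h') :
    (((Finset.univ : Finset (A → A → Bool)).filter
      fun ω => ∀ h ∈ H, ¬ (ω (e h).1 (e h).2 = s h ∧ ω (f h).1 (f h).2 = t h)).card : ℝ) ≤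
      (3/4 : ℝ) ^ H.card * Fintype.card (A → A → Bool) := by
  have h := coin_bound e f s t H hst hd
  refine le_trans ?_ (h.trans_eq ?_)
  rotate_left
  · congr 2
    exact Fintype.card_congr (Equiv.curry A A Bool)
  have : ((Finset.univ : Finset (A → A → Bool)).filter
      fun ω => ∀ h ∈ H, ¬ (ω (e h).1 (e h).2 = s h ∧ ω (f h).1 (f h).2 = t h)).card ≤
      ((Finset.univ : Finset (A × A → Bool)).filter
      fun ω => ∀ h ∈ H, ¬ (ω (e h) = s h ∧ ω (f h) = t h)).card := by
    apply Finset.card_le_card_of_injOn (fun ω => fun p => ω p.1 p.2)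
    · intro ω hω
      have hω := (Finset.mem_filter.1 hω).2
      rw [Finset.mem_coe, Finset.mem_filter]
      exact ⟨Finset.mem_univ _, hω⟩
    · intro ω _ ω' _ h
      funext a b
      exact congrFun h (a, b)
  exact_mod_cast this

/-- the pair `p q` crosses the chord `lo hi` -/
def CrN (lo hi p q : ℕ) : Prop :=
  (lo < p ∧ p < hi ∧ (q < lo ∨ hi < q)) ∨ (lo < q ∧ q < hi ∧ (p < lo ∨ hi < p))

/-- the chord `p q` has length at least `k` (on `N` points) -/
def LongN (N k p q : ℕ) : Prop :=
  (p + k + 1 ≤ q ∧ q + k + 1 ≤ N + p) ∨ (q + k + 1 ≤ p ∧ p + k + 1 ≤ N + q)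

/-- two disjoint intervals of lengths `m`, `s` in `[0,N)` -/
def GoodPair (N m s i j : ℕ) : Prop := i + m ≤ N ∧ j + s ≤ N ∧ (i + m ≤ j ∨ j + s ≤ i)

lemma geom1 {n m s lo hi : ℕ} (hm : 1 ≤ m) (hs : 4 * m + 10 ≤ s) (hn : 100 * s ≤ n)
    (h1 : lo < hi) (h2 : hi < 2 * n) (h3 : LongN (2*n) (3*m) lo hi) :
    ∃ i j, GoodPair (2*n) m s i j ∧ ∀ p q, i ≤ p → p < i + m → j ≤ q → q < j + s →
      CrN lo hi p q ∧ LongN (2*n) (16*s) p q := by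
  unfold GoodPair CrN LongN at *
  by_cases hbig : n ≤ hi - lo
  · by_cases hx : m ≤ lo
    · exact ⟨0, lo + 1 + 17 * s, by omega, fun p q _ _ _ _ => by omega⟩
    · exact ⟨hi + 1, lo + 1 + 17 * s, by omega, fun p q _ _ _ _ => by omega⟩
  · by_cases hx : 35 * s ≤ lo
    · exact ⟨lo + 1, 17 * s, by omega, fun p q _ _ _ _ => by omega⟩
    · exact ⟨lo + 1, hi + 1 + 17 * s, by omega, fun p q _ _ _ _ => by omega⟩

lemma geom2 {n m s lo hi lo' hi' : ℕ} (hm : 1 ≤ m) (hs : 4 * m + 10 ≤ s) (hn : 100 * s ≤ n)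
    (h1 : lo < hi) (h2 : hi < 2 * n) (h3 : LongN (2*n) (16*s) lo hi)
    (h1' : lo' < hi') (h2' : hi' < 2 * n) (h3' : LongN (2*n) (16*s) lo' hi')
    (hlt : lo < lo') (hne : hi ≠ hi') (hne' : lo' ≠ hi) :
    ∃ i j, GoodPair (2*n) m s i j ∧ ∀ p q, i ≤ p → p < i + m → j ≤ q → q < j + s →
      (CrN lo hi p q ∧ CrN lo' hi' p q) ∧ LongN (2*n) (3*m) p q := by
  unfold GoodPair CrN LongN at *
  by_cases ha : hi < lo'
  · exact ⟨lo + 1, lo' + 1, by omega, fun p q _ _ _ _ => by omega⟩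
  by_cases hb : hi' < hi
  · by_cases hx : 8 * s ≤ lo
    · exact ⟨0, lo' + 1, by omega, fun p q _ _ _ _ => by omega⟩
    · exact ⟨lo' + 1, hi + 1, by omega, fun p q _ _ _ _ => by omega⟩
  by_cases hc : 7 * s ≤ lo' - lo ∧ 7 * s ≤ hi' - hi
  · exact ⟨lo + 1, hi + 1, by omega, fun p q _ _ _ _ => by omega⟩
  · by_cases hx : 3 * s ≤ lo
    · exact ⟨0, lo' + 1, by omega, fun p q _ _ _ _ => by omega⟩
    · exact ⟨lo' + 1, hi' + 1, by omega, fun p q _ _ _ _ => by omega⟩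

section Diagram
variable {n : ℕ}

/-- the quasi-randomness property of diagrams -/
def Mixing (w s : ℕ) (C : ChordDiagram n) : Prop :=
  ∀ i j, GoodPair (2*n) (2*w) s i j → ∃ x : Fin (2*n), i ≤ (x:ℕ) ∧ (x:ℕ) < i + 2*w ∧
    j ≤ (C.1 x : ℕ) ∧ (C.1 x : ℕ) < j + s

/-- chords between two intervals -/
noncomputable def HSet (C : ChordDiagram n) (m s i j : ℕ) : Finset (Fin (2*n)) :=
  Finset.univ.filter fun x => i ≤ (x:ℕ) ∧ (x:ℕ) < i + m ∧ j ≤ (C.1 x : ℕ) ∧ (C.1 x : ℕ) < j + s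

lemma card_HSet {C : ChordDiagram n} {w m s i j : ℕ} (hw : 2 * w * w ≤ m) (hC : Mixing w s C)
    (hg : GoodPair (2*n) m s i j) : w ≤ (HSet C m s i j).card := by
  have key : ∀ t : Fin w, ∃ x : Fin (2*n), i + t * (2*w) ≤ (x:ℕ) ∧ (x:ℕ) < i + t * (2*w) + 2*w ∧
      j ≤ (C.1 x : ℕ) ∧ (C.1 x : ℕ) < j + s := by
    intro t
    have ht : (t:ℕ) * (2*w) + 2 * w ≤ m := by
      have : ((t:ℕ) + 1) * (2*w) ≤ w * (2*w) := Nat.mul_le_mul_right _ t.2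
      nlinarith
    apply hC
    unfold GoodPair at *
    omega
  choose g hg' using key
  have : (Finset.univ : Finset (Fin w)).card ≤ (HSet C m s i j).card := by
    apply Finset.card_le_card_of_injOn g
    · intro t _
      have ht : (t:ℕ) * (2*w) + 2 * w ≤ m := by
        have : ((t:ℕ) + 1) * (2*w) ≤ w * (2*w) := Nat.mul_le_mul_right _ t.2
        nlinarith
      have := hg' t
      simp only [HSet, Finset.coe_filter, Finset.mem_univ, true_and, Set.mem_ofPred_eq]
      omega
    · intro t _ t' _ h
      have h1 := hg' t
      have h2 := hg' t'
      rw [h] at h1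
      by_contra hne
      have hne' : (t:ℕ) ≠ t' := fun h => hne (Fin.ext h)
      rcases lt_or_gt_of_ne hne' with hl | hl
      · have : ((t:ℕ) + 1) * (2*w) ≤ t' * (2*w) := Nat.mul_le_mul_right _ hl
        have e : ((t:ℕ) + 1) * (2*w) = t * (2*w) + 2 * w := by ring
        omega
      · have : ((t':ℕ) + 1) * (2*w) ≤ t * (2*w) := Nat.mul_le_mul_right _ hl
        have e : ((t':ℕ) + 1) * (2*w) = t' * (2*w) + 2 * w := by ring
        omega
  simpa using this

/-- coin coordinate of a pair of chords -/
noncomputable def coinE (C : ChordDiagram n) (x u : Fin (2*n)) : Fin (2*n) × Fin (2*n) :=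
  if chordRep C x ≤ chordRep C u then (chordRep C x, chordRep C u) else (chordRep C u, chordRep C x)

/-- the value of the coin for which `x` goes over `u` -/
noncomputable def coinS (C : ChordDiagram n) (x u : Fin (2*n)) : Bool :=
  decide (chordRep C x ≤ chordRep C u)

lemma overD_iff (C : ChordDiagram n) (ω : Fin (2*n) → Fin (2*n) → Bool) (x u : Fin (2*n)) :
    OverD (C, ω) x u ↔ Crosses C x u ∧ ω (coinE C x u).1 (coinE C x u).2 = coinS C x u := by
  unfold OverD coinE coinS
  by_cases h : chordRep C x ≤ chordRep C u
  · simp [h]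
  · simp [h, not_le.1 h]

lemma chordRep_partner (C : ChordDiagram n) (x : Fin (2*n)) : chordRep C (C.1 x) = chordRep C x := by
  unfold chordRep
  rw [C.2.1 x, min_comm]

lemma chordRep_eq (C : ChordDiagram n) {x u : Fin (2*n)} (h : chordRep C x = chordRep C u) :
    u = x ∨ u = C.1 x := by
  unfold chordRep at h
  rcases min_choice x (C.1 x) with h1 | h1 <;> rcases min_choice u (C.1 u) with h2 | h2 <;>
    rw [h1, h2] at h
  · exact Or.inl h.symm
  · right; rw [h, C.2.1]
  · right; exact h.symm
  · left; rw [← C.2.1 u, ← h, C.2.1]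

lemma chordLength_partner (C : ChordDiagram n) (x : Fin (2*n)) :
    chordLength C (C.1 x) = chordLength C x := by
  unfold chordLength
  rw [C.2.1 x, min_comm (x : ℕ), max_comm (x : ℕ)]

lemma crosses_partner_left (C : ChordDiagram n) (x u : Fin (2*n)) :
    Crosses C (C.1 x) u ↔ Crosses C x u := by
  unfold Crosses Between
  rw [C.2.1 x, min_comm, max_comm]

lemma crosses_partner_right (C : ChordDiagram n) (x u : Fin (2*n)) :
    Crosses C x (C.1 u) ↔ Crosses C x u := by
  unfold Crosses
  rw [C.2.1 u]
  unfold Xor' Xor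
  tauto

lemma overD_partner_left (D : OrientedChordDiagram n) (x u : Fin (2*n)) :
    OverD D (D.1.1 x) u ↔ OverD D x u := by
  unfold OverD
  rw [chordRep_partner, crosses_partner_left]

lemma overD_partner_right (D : OrientedChordDiagram n) (x u : Fin (2*n)) :
    OverD D x (D.1.1 u) ↔ OverD D x u := by
  unfold OverD
  rw [chordRep_partner, crosses_partner_right]

lemma longN_iff (C : ChordDiagram n) (x : Fin (2*n)) (k : ℕ) (hk : 1 ≤ k) :
    LongN (2*n) k x (C.1 x) ↔ k ≤ chordLength C x := by
  unfold LongN chordLength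
  have h1 := x.2
  have h2 := (C.1 x).2
  omega

/-- upper endpoint -/
def chordHi (C : ChordDiagram n) (x : Fin (2*n)) : Fin (2*n) := max x (C.1 x)

lemma longN_lohi (C : ChordDiagram n) (x : Fin (2*n)) (k : ℕ) (hk : 1 ≤ k) :
    LongN (2*n) k (chordRep C x) (chordHi C x) ↔ k ≤ chordLength C x := by
  rw [← longN_iff C x k hk]
  unfold LongN chordRep chordHi
  rcases le_total x (C.1 x) with h | h
  · rw [min_eq_left h, max_eq_right h]
  · rw [min_eq_right h, max_eq_left h]; tauto

lemma rep_lt_hi (C : ChordDiagram n) (x : Fin (2*n)) : chordRep C x < chordHi C x := by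
  have := C.2.2 x
  unfold chordRep chordHi
  exact min_lt_max.2 this.symm

lemma hi_eq (C : ChordDiagram n) (x : Fin (2*n)) : chordHi C x = C.1 (chordRep C x) := by
  unfold chordRep chordHi
  rcases le_total x (C.1 x) with h | h
  · rw [min_eq_left h, max_eq_right h]
  · rw [min_eq_right h, max_eq_left h, C.2.1]

lemma crosses_of_CrN (C : ChordDiagram n) (c h : Fin (2*n))
    (hc : CrN (chordRep C c) (chordHi C c) h (C.1 h)) : Crosses C c h := by
  unfold Crosses Between Xor' Xor
  change ((chordRep C c < h ∧ h < chordHi C c) ∧ ¬(chordRep C c < C.1 h ∧ C.1 h < chordHi C c)) ∨ 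
    ((chordRep C c < C.1 h ∧ C.1 h < chordHi C c) ∧ ¬ (chordRep C c < h ∧ h < chordHi C c))
  unfold CrN at hc
  simp only [Fin.lt_def]
  omega

lemma crosses_symm_of_CrN (C : ChordDiagram n) (c h : Fin (2*n))
    (hc : CrN (chordRep C c) (chordHi C c) h (C.1 h)) : Crosses C h c := by
  have key : Xor (Between h (C.1 h) (chordRep C c)) (Between h (C.1 h) (chordHi C c)) := by
    unfold Between Xor
    unfold CrN at hc
    have := rep_lt_hi C c
    rcases le_total h (C.1 h) with h1 | h1
    · rw [min_eq_left h1, max_eq_right h1]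
      simp only [Fin.lt_def, Fin.le_def] at *
      omega
    · rw [min_eq_right h1, max_eq_left h1]
      simp only [Fin.lt_def, Fin.le_def] at *
      omega
  unfold Crosses
  unfold chordRep chordHi at key
  rcases le_total c (C.1 c) with h1 | h1
  · rwa [min_eq_left h1, max_eq_right h1] at key
  · rw [min_eq_right h1, max_eq_left h1] at key
    change Xor _ _
    unfold Xor at *
    tauto

lemma CrN_rep_ne (C : ChordDiagram n) (c h : Fin (2*n))
    (hc : CrN (chordRep C c) (chordHi C c) h (C.1 h)) : chordRep C h ≠ chordRep C c := by
  intro he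
  have := rep_lt_hi C c
  have h2 := hi_eq C c
  rcases chordRep_eq C he with h1 | h1
  · subst h1
    unfold CrN chordRep chordHi at hc
    rcases le_total c (C.1 c) with h1 | h1
    · rw [min_eq_left h1, max_eq_right h1] at hc; omega
    · rw [min_eq_right h1, max_eq_left h1] at hc; omega
  · subst h1
    unfold CrN chordRep chordHi at hc
    rw [C.2.1] at hc
    rcases le_total h (C.1 h) with h1 | h1
    · rw [min_eq_right h1, max_eq_left h1] at hc; omega
    · rw [min_eq_left h1, max_eq_right h1] at hc; omega

lemma coinE_eq (C : ChordDiagram n) {x u y v : Fin (2*n)} (h : coinE C x u = coinE C y v) :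
    (chordRep C x = chordRep C y ∧ chordRep C u = chordRep C v) ∨
    (chordRep C x = chordRep C v ∧ chordRep C u = chordRep C y) := by
  unfold coinE at h
  split_ifs at h <;> simp only [Prod.mk.injEq] at h <;> tauto

lemma HSet_rep_inj {C : ChordDiagram n} {m s i j : ℕ} (hg : GoodPair (2*n) m s i j)
    {h h' : Fin (2*n)} (h1 : h ∈ HSet C m s i j) (h2 : h' ∈ HSet C m s i j) (hne : h ≠ h') :
    chordRep C h ≠ chordRep C h' := by
  intro he
  simp only [HSet, Finset.mem_filter, Finset.mem_univ, true_and] at h1 h2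
  rcases chordRep_eq C he with h3 | h3
  · exact hne h3.symm
  · rw [h3] at h2
    unfold GoodPair at hg
    omega

end Diagram

lemma union_bound {Ω A : Type*} [Fintype Ω] [Fintype A] (P : A → Ω → Prop)
    [DecidablePred fun ω => ∃ x, P x ω] (B : ℝ)
    (h : ∀ x, ((Finset.univ.filter (P x)).card : ℝ) ≤ B) :
    ((Finset.univ.filter fun ω => ∃ x, P x ω).card : ℝ) ≤ Fintype.card A * B := by
  have h1 : (Finset.univ.filter fun ω => ∃ x, P x ω) ⊆
      (Finset.univ : Finset A).biUnion fun x => Finset.univ.filter (P x) := by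
    intro ω hω
    simpa using hω
  have h2 := (Finset.card_le_card h1).trans Finset.card_biUnion_le
  have h3 : ((Finset.univ.filter fun ω => ∃ x, P x ω).card : ℝ) ≤
      ∑ x : A, ((Finset.univ.filter (P x)).card : ℝ) := by exact_mod_cast h2
  refine h3.trans ((Finset.sum_le_sum fun x _ => h x).trans ?_)
  simp

lemma card_interval {N i l : ℕ} (h : i + l ≤ N) :
    l ≤ (Finset.univ.filter fun x : Fin N => i ≤ (x:ℕ) ∧ (x:ℕ) < i + l).card := by
  have : (Finset.univ : Finset (Fin l)).card ≤
      (Finset.univ.filter fun x : Fin N => i ≤ (x:ℕ) ∧ (x:ℕ) < i + l).card := by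
    apply Finset.card_le_card_of_injOn (fun t => ⟨i + t, by omega⟩)
    · intro t _
      simp
    · intro t _ t' _ h
      simp only [Fin.mk.injEq, Nat.add_left_cancel_iff] at h
      exact Fin.ext h
  simpa using this

lemma coin_use {A κ : Type*} [Fintype A] [DecidableEq A] (w : ℕ) (e f : κ → A × A)
    (s t : κ → Bool) (H : Finset κ) (hw : w ≤ H.card)
    (hst : ∀ h ∈ H, e h = f h → s h = t h)
    (hd : ∀ h ∈ H, ∀ h' ∈ H, h ≠ h' → e h ≠ e h' ∧ e h ≠ f h' ∧ f h ≠ f h')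
    (B : (A → A → Bool) → Prop)
    (hB : ∀ ω, B ω → ∀ h ∈ H, ¬ (ω (e h).1 (e h).2 = s h ∧ ω (f h).1 (f h).2 = t h)) :
    ((Finset.univ.filter B).card : ℝ) ≤
      (3/4 : ℝ) ^ w * Fintype.card (A → A → Bool) := by
  have h1 := coin_bound' e f s t H hst hd
  have h4 : (3/4 : ℝ) ^ H.card ≤ (3/4 : ℝ) ^ w :=
    pow_le_pow_of_le_one (by norm_num) (by norm_num) hw
  refine le_trans (Nat.cast_le.2 (Finset.card_le_card ?_)) (h1.trans (by gcongr))
  intro ω hω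
  have hω := (Finset.mem_filter.1 hω).2
  exact (@Finset.mem_filter _ _ _ _ _).2 ⟨Finset.mem_univ _, hB ω hω⟩

section Diagram2
variable {n : ℕ}

lemma geomC1 (C : ChordDiagram n) {m s : ℕ} (hm : 1 ≤ m) (hs : 4 * m + 10 ≤ s)
    (hn : 100 * s ≤ n) (c : Fin (2*n)) (hc : 3 * m ≤ chordLength C c) :
    ∃ i j, GoodPair (2*n) m s i j ∧ ∀ h ∈ HSet C m s i j,
      CrN (chordRep C c) (chordHi C c) h (C.1 h) ∧ 16 * s ≤ chordLength C h := by
  obtain ⟨i, j, hg, H⟩ := geom1 hm hs hn (Fin.lt_def.1 (rep_lt_hi C c)) (chordHi C c).2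
    ((longN_lohi C c _ (by omega)).2 hc)
  refine ⟨i, j, hg, fun h hh => ?_⟩
  simp only [HSet, Finset.mem_filter, Finset.mem_univ, true_and] at hh
  have := H h (C.1 h) hh.1 hh.2.1 hh.2.2.1 hh.2.2.2
  exact ⟨this.1, (longN_iff C h _ (by omega)).1 this.2⟩

lemma geomC2_aux (C : ChordDiagram n) {m s : ℕ} (hm : 1 ≤ m) (hs : 4 * m + 10 ≤ s)
    (hn : 100 * s ≤ n) (a b : Fin (2*n)) (ha : 16 * s ≤ chordLength C a)
    (hb : 16 * s ≤ chordLength C b) (hab : chordRep C a < chordRep C b) :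
    ∃ i j, GoodPair (2*n) m s i j ∧ ∀ h ∈ HSet C m s i j,
      CrN (chordRep C a) (chordHi C a) h (C.1 h) ∧ CrN (chordRep C b) (chordHi C b) h (C.1 h) ∧
      3 * m ≤ chordLength C h := by
  have hne : (chordHi C a : ℕ) ≠ chordHi C b := by
    intro h
    have h := Fin.ext h
    rw [hi_eq, hi_eq] at h
    have h2 := congrArg C.1 h
    rw [C.2.1, C.2.1] at h2
    exact hab.ne h2
  have hne' : (chordRep C b : ℕ) ≠ chordHi C a := by
    intro h
    have h := Fin.ext h
    have h2 := hi_eq C b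
    rw [h, hi_eq C a, C.2.1] at h2
    have h3 := rep_lt_hi C b
    rw [h2] at h3
    exact absurd h3 (not_lt.2 hab.le)
  obtain ⟨i, j, hg, H⟩ := geom2 hm hs hn (Fin.lt_def.1 (rep_lt_hi C a)) (chordHi C a).2
    ((longN_lohi C a _ (by omega)).2 ha) (Fin.lt_def.1 (rep_lt_hi C b)) (chordHi C b).2
    ((longN_lohi C b _ (by omega)).2 hb) (Fin.lt_def.1 hab) hne hne'
  refine ⟨i, j, hg, fun h hh => ?_⟩
  simp only [HSet, Finset.mem_filter, Finset.mem_univ, true_and] at hh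
  have := H h (C.1 h) hh.1 hh.2.1 hh.2.2.1 hh.2.2.2
  exact ⟨this.1.1, this.1.2, (longN_iff C h _ (by omega)).1 this.2⟩

lemma geomC2 (C : ChordDiagram n) {m s : ℕ} (hm : 1 ≤ m) (hs : 4 * m + 10 ≤ s)
    (hn : 100 * s ≤ n) (a b : Fin (2*n)) (ha : 16 * s ≤ chordLength C a)
    (hb : 16 * s ≤ chordLength C b) (hab : chordRep C a ≠ chordRep C b) :
    ∃ i j, GoodPair (2*n) m s i j ∧ ∀ h ∈ HSet C m s i j,
      CrN (chordRep C a) (chordHi C a) h (C.1 h) ∧ CrN (chordRep C b) (chordHi C b) h (C.1 h) ∧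
      3 * m ≤ chordLength C h := by
  rcases lt_or_gt_of_ne hab with h | h
  · exact geomC2_aux C hm hs hn a b ha hb h
  · obtain ⟨i, j, hg, H⟩ := geomC2_aux C hm hs hn b a hb ha h
    exact ⟨i, j, hg, fun h hh => ⟨(H h hh).2.1, (H h hh).1, (H h hh).2.2⟩⟩

/-- no very long out-neighbour -/
def BadOut (C : ChordDiagram n) (m s : ℕ) (c : Fin (2*n)) (ω : Fin (2*n) → Fin (2*n) → Bool) : Prop :=
  3 * m ≤ chordLength C c ∧ ¬ ∃ a, 16 * s ≤ chordLength C a ∧ OverD (C, ω) c a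

/-- no very long in-neighbour -/
def BadIn (C : ChordDiagram n) (m s : ℕ) (c : Fin (2*n)) (ω : Fin (2*n) → Fin (2*n) → Bool) : Prop :=
  3 * m ≤ chordLength C c ∧ ¬ ∃ a, 16 * s ≤ chordLength C a ∧ OverD (C, ω) a c

/-- no path of length two between very long chords -/
def BadMid (C : ChordDiagram n) (m s : ℕ) (p : Fin (2*n) × Fin (2*n))
    (ω : Fin (2*n) → Fin (2*n) → Bool) : Prop :=
  16 * s ≤ chordLength C p.1 ∧ 16 * s ≤ chordLength C p.2 ∧ chordRep C p.1 ≠ chordRep C p.2 ∧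
    ¬ ∃ h, 3 * m ≤ chordLength C h ∧ OverD (C, ω) p.1 h ∧ OverD (C, ω) h p.2

lemma card_filter_false {Ω : Type*} [Fintype Ω] (Q : Ω → Prop) [DecidablePred Q]
    (hQ : ∀ ω, ¬ Q ω) (B : ℝ) (hB : 0 ≤ B) : ((Finset.univ.filter Q).card : ℝ) ≤ B := by
  rw [Finset.filter_false_of_mem (fun ω _ => hQ ω)]
  simpa using hB

lemma badOut_bound (C : ChordDiagram n) {m s w : ℕ} (hm : 1 ≤ m) (hs : 4 * m + 10 ≤ s)
    (hn : 100 * s ≤ n) (hw : 2 * w * w ≤ m) (hC : Mixing w s C) (c : Fin (2*n)) :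
    ((Finset.univ.filter (BadOut C m s c)).card : ℝ) ≤
      (3/4 : ℝ) ^ w * Fintype.card (Fin (2*n) → Fin (2*n) → Bool) := by
  by_cases hc : 3 * m ≤ chordLength C c
  swap
  · exact card_filter_false _ (fun _ h => hc h.1) _ (by positivity)
  obtain ⟨i, j, hg, H⟩ := geomC1 C hm hs hn c hc
  apply coin_use w (fun h => coinE C c h) (fun h => coinE C c h) (fun h => coinS C c h)
    (fun h => coinS C c h) (HSet C m s i j) (card_HSet hw hC hg)
  · intro _ _ _; rfl
  · intro h hh h' hh' hne
    have h1 := HSet_rep_inj hg hh hh' hne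
    have h2 := CrN_rep_ne C c h (H h hh).1
    have : coinE C c h ≠ coinE C c h' := by
      intro he
      rcases coinE_eq C he with h3 | h3
      · exact h1 h3.2
      · exact h2 h3.2
    exact ⟨this, this, this⟩
  · intro ω hω h hh hcon
    refine hω.2 ⟨h, (H h hh).2, ?_⟩
    rw [overD_iff]
    exact ⟨crosses_of_CrN C c h (H h hh).1, hcon.1⟩

lemma badIn_bound (C : ChordDiagram n) {m s w : ℕ} (hm : 1 ≤ m) (hs : 4 * m + 10 ≤ s)
    (hn : 100 * s ≤ n) (hw : 2 * w * w ≤ m) (hC : Mixing w s C) (c : Fin (2*n)) :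
    ((Finset.univ.filter (BadIn C m s c)).card : ℝ) ≤
      (3/4 : ℝ) ^ w * Fintype.card (Fin (2*n) → Fin (2*n) → Bool) := by
  by_cases hc : 3 * m ≤ chordLength C c
  swap
  · exact card_filter_false _ (fun _ h => hc h.1) _ (by positivity)
  obtain ⟨i, j, hg, H⟩ := geomC1 C hm hs hn c hc
  apply coin_use w (fun h => coinE C h c) (fun h => coinE C h c) (fun h => coinS C h c)
    (fun h => coinS C h c) (HSet C m s i j) (card_HSet hw hC hg)
  · intro _ _ _; rfl
  · intro h hh h' hh' hne
    have h1 := HSet_rep_inj hg hh hh' hne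
    have h2 := CrN_rep_ne C c h (H h hh).1
    have : coinE C h c ≠ coinE C h' c := by
      intro he
      rcases coinE_eq C he with h3 | h3
      · exact h1 h3.1
      · exact h2 h3.1
    exact ⟨this, this, this⟩
  · intro ω hω h hh hcon
    refine hω.2 ⟨h, (H h hh).2, ?_⟩
    rw [overD_iff]
    exact ⟨crosses_symm_of_CrN C c h (H h hh).1, hcon.1⟩

lemma badMid_bound (C : ChordDiagram n) {m s w : ℕ} (hm : 1 ≤ m) (hs : 4 * m + 10 ≤ s)
    (hn : 100 * s ≤ n) (hw : 2 * w * w ≤ m) (hC : Mixing w s C) (p : Fin (2*n) × Fin (2*n)) :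
    ((Finset.univ.filter (BadMid C m s p)).card : ℝ) ≤
      (3/4 : ℝ) ^ w * Fintype.card (Fin (2*n) → Fin (2*n) → Bool) := by
  obtain ⟨a, b⟩ := p
  by_cases ha : 16 * s ≤ chordLength C a
  swap
  · exact card_filter_false _ (fun _ h => ha h.1) _ (by positivity)
  by_cases hb : 16 * s ≤ chordLength C b ∧ chordRep C a ≠ chordRep C b
  swap
  · have : Finset.univ.filter (BadMid C m s (a, b)) = ∅ := by
      rw [Finset.filter_eq_empty_iff]
      rintro ω _ ⟨_, h2, h3, _⟩
      exact hb ⟨h2, h3⟩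
    rw [this, Finset.card_empty, Nat.cast_zero]
    positivity
  obtain ⟨hb, hab⟩ := hb
  obtain ⟨i, j, hg, H⟩ := geomC2 C hm hs hn a b ha hb hab
  apply coin_use w (fun h => coinE C a h) (fun h => coinE C h b) (fun h => coinS C a h)
    (fun h => coinS C h b) (HSet C m s i j) (card_HSet hw hC hg)
  · intro h hh he
    exfalso
    have h2 := CrN_rep_ne C a h (H h hh).1
    rcases coinE_eq C he with h3 | h3
    · exact h2 h3.1.symm
    · exact hab h3.1
  · intro h hh h' hh' hne
    have h1 := HSet_rep_inj hg hh hh' hne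
    have h2 := CrN_rep_ne C a h (H h hh).1
    have h2' := CrN_rep_ne C b h (H h hh).2.1
    refine ⟨?_, ?_, ?_⟩
    · intro he
      rcases coinE_eq C he with h3 | h3
      · exact h1 h3.2
      · exact h2 h3.2
    · intro he
      rcases coinE_eq C he with h3 | h3
      · exact h2' h3.2
      · exact hab h3.1
    · intro he
      rcases coinE_eq C he with h3 | h3
      · exact h1 h3.1
      · exact h2' h3.1
  · intro ω hω h hh hcon
    refine hω.2.2.2 ⟨h, (H h hh).2.2, ?_⟩
    rw [overD_iff, overD_iff]
    exact ⟨⟨crosses_of_CrN C a h (H h hh).1, hcon.1⟩, crosses_symm_of_CrN C b h (H h hh).2.1, hcon.2⟩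

lemma strong_of_good (C : ChordDiagram n) {m s : ℕ} (hs : 4 * m + 10 ≤ s)
    (ω : Fin (2*n) → Fin (2*n) → Bool) (h1 : ¬ ∃ c, BadOut C m s c ω)
    (h2 : ¬ ∃ c, BadIn C m s c ω) (h3 : ¬ ∃ p, BadMid C m s p ω) :
    StronglyConnectedIn ((C, ω) : OrientedChordDiagram n) {x | 3 * m ≤ chordLength C x} := by
  intro c hc d hd
  have hc : 3 * m ≤ chordLength C c := hc
  have hd : 3 * m ≤ chordLength C d := hd
  obtain ⟨a, ha, hca⟩ : ∃ a, 16 * s ≤ chordLength C a ∧ OverD (C, ω) c a := by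
    by_contra h
    exact h1 ⟨c, hc, h⟩
  obtain ⟨b, hb, hbd⟩ : ∃ b, 16 * s ≤ chordLength C b ∧ OverD (C, ω) b d := by
    by_contra h
    exact h2 ⟨d, hd, h⟩
  have ha' : 3 * m ≤ chordLength C a := by omega
  have hb' : 3 * m ≤ chordLength C b := by omega
  by_cases hab : chordRep C a = chordRep C b
  · have had : OverD (C, ω) a d := by
      rcases chordRep_eq C hab with h | h
      · rwa [h] at hbd
      · rw [h] at hbd
        exact (overD_partner_left (C, ω) a d).1 hbd
    exact (Relation.ReflTransGen.single ⟨hc, ha', hca⟩).tail ⟨ha', hd, had⟩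
  · obtain ⟨h, hh, hah, hhb⟩ : ∃ h, 3 * m ≤ chordLength C h ∧ OverD (C, ω) a h ∧ OverD (C, ω) h b := by
      by_contra h
      exact h3 ⟨(a, b), ha, hb, hab, h⟩
    exact (((Relation.ReflTransGen.single ⟨hc, ha', hca⟩).tail ⟨ha', hh, hah⟩).tail
      ⟨hh, hb', hhb⟩).tail ⟨hb', hd, hbd⟩

lemma coin_total (C : ChordDiagram n) {m s w : ℕ} (hm : 1 ≤ m) (hs : 4 * m + 10 ≤ s)
    (hn : 100 * s ≤ n) (hw : 2 * w * w ≤ m) (hC : Mixing w s C) :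
    ((Finset.univ.filter fun ω : Fin (2*n) → Fin (2*n) → Bool =>
      ¬ StronglyConnectedIn ((C, ω) : OrientedChordDiagram n) {x | 3 * m ≤ chordLength C x}).card : ℝ) ≤
      (4 * n + 4 * n ^ 2) * (3/4 : ℝ) ^ w * Fintype.card (Fin (2*n) → Fin (2*n) → Bool) := by
  have u1 := union_bound _ _ (badOut_bound C hm hs hn hw hC)
  have u2 := union_bound _ _ (badIn_bound C hm hs hn hw hC)
  have u3 := union_bound _ _ (badMid_bound C hm hs hn hw hC)
  have hsub : (Finset.univ.filter fun ω : Fin (2*n) → Fin (2*n) → Bool =>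
      ¬ StronglyConnectedIn ((C, ω) : OrientedChordDiagram n) {x | 3 * m ≤ chordLength C x}) ⊆
      ((Finset.univ.filter fun ω => ∃ c, BadOut C m s c ω) ∪
      (Finset.univ.filter fun ω => ∃ c, BadIn C m s c ω)) ∪
      (Finset.univ.filter fun ω => ∃ p, BadMid C m s p ω) := by
    intro ω hω
    simp only [Finset.mem_union, Finset.mem_filter, Finset.mem_univ, true_and] at hω ⊢
    by_contra hcon
    push Not at hcon
    apply hω
    apply strong_of_good C hs ω
    · rintro ⟨c, h⟩; exact hcon.1.1 c h
    · rintro ⟨c, h⟩; exact hcon.1.2 c h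
    · rintro ⟨c, h⟩; exact hcon.2 c h
  have h4 := (Finset.card_le_card hsub).trans ((Finset.card_union_le _ _).trans
    (Nat.add_le_add_right (Finset.card_union_le _ _) _))
  have h5 : ((Finset.univ.filter fun ω : Fin (2*n) → Fin (2*n) → Bool =>
      ¬ StronglyConnectedIn ((C, ω) : OrientedChordDiagram n) {x | 3 * m ≤ chordLength C x}).card : ℝ) ≤
      ((Finset.univ.filter fun ω => ∃ c, BadOut C m s c ω).card : ℝ) +
      (Finset.univ.filter fun ω => ∃ c, BadIn C m s c ω).card +
      (Finset.univ.filter fun ω => ∃ p, BadMid C m s p ω).card := by exact_mod_cast h4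
  refine h5.trans ((add_le_add (add_le_add u1 u2) u3).trans (le_of_eq ?_))
  simp only [Fintype.card_prod, Fintype.card_fin]
  push_cast
  ring

lemma card_CD_le (X Y : Finset (Fin (2*n))) :
    (Finset.univ.filter fun C : ChordDiagram n => ∀ x ∈ X, C.1 x ∉ Y).card ≤
    ((IM (Finset.univ : Finset (Fin (2*n)))).filter fun f => ∀ x ∈ X, f x ∉ Y).card := by
  apply Finset.card_le_card_of_injOn
    (fun C => Function.Involutive.toPerm C.1 C.2.1)
  · intro C hC
    have hC := (Finset.mem_filter.1 hC).2
    rw [Finset.mem_coe, Finset.mem_filter, mem_IM]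
    exact ⟨⟨C.2.1, fun i => ⟨fun _ => Finset.mem_univ i, fun _ => C.2.2 i⟩⟩, hC⟩
  · intro C _ C' _ h
    apply Subtype.ext
    funext i
    exact congrArg (fun f : Equiv.Perm (Fin (2*n)) => f i) h

lemma le_card_CD : nuM (2*n) ≤ Fintype.card (ChordDiagram n) := by
  rw [← card_IM (2*n) (Finset.univ : Finset (Fin (2*n))) (by simp), ← Fintype.card_coe]
  apply Fintype.card_le_of_injective
    (fun f : IM (Finset.univ : Finset (Fin (2*n))) =>
      (⟨f.1, ((mem_IM _ _).1 f.2).1, fun i => (((mem_IM _ _).1 f.2).2 i).2 (Finset.mem_univ i)⟩ : ChordDiagram n))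
  intro f g h
  apply Subtype.ext
  ext i
  simpa using congrArg (fun C : ChordDiagram n => (C.1 i : ℕ)) h

lemma nuM_pos (n : ℕ) : 0 < nuM (2*n) := by
  induction n with
  | zero => simp [nuM]
  | succ n ih =>
    rw [show 2 * (n+1) = 2 * n + 2 by ring, nuM]
    positivity

/-- no chord between two given intervals -/
def BadPair (s w : ℕ) (p : Fin (2*n+1) × Fin (2*n+1)) (C : ChordDiagram n) : Prop :=
  GoodPair (2*n) (2*w) s p.1 p.2 ∧ ¬ ∃ x : Fin (2*n), (p.1:ℕ) ≤ (x:ℕ) ∧ (x:ℕ) < p.1 + 2*w ∧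
    (p.2:ℕ) ≤ (C.1 x : ℕ) ∧ (C.1 x : ℕ) < p.2 + s

lemma mixing_bound {s w : ℕ} (q : ℝ) (hq0 : 0 ≤ q) (hq1 : q ≤ 1) (hq : (1 - q) * (2*n : ℕ) ≤ s) :
    ((Finset.univ.filter fun C : ChordDiagram n => ¬ Mixing w s C).card : ℝ) ≤
      (2 * n + 1)^2 * q ^ w * Fintype.card (ChordDiagram n) := by
  have hP : ∀ p, ((Finset.univ.filter (BadPair (n := n) s w p)).card : ℝ) ≤ q ^ w * Fintype.card (ChordDiagram n) := by
    rintro ⟨i, j⟩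
    by_cases hg : GoodPair (2*n) (2*w) s i j
    swap
    · exact card_filter_false _ (fun _ h => hg h.1) _ (by positivity)
    set X := Finset.univ.filter fun x : Fin (2*n) => (i:ℕ) ≤ (x:ℕ) ∧ (x:ℕ) < i + 2*w with hX
    set Y := Finset.univ.filter fun x : Fin (2*n) => (j:ℕ) ≤ (x:ℕ) ∧ (x:ℕ) < j + s with hY
    have hXc : 2 * w ≤ X.card := card_interval hg.1
    have hYc : s ≤ Y.card := card_interval hg.2.1
    have hXY : Disjoint X Y := by
      rw [Finset.disjoint_left]
      intro x hx hy
      simp only [hX, hY, Finset.mem_filter, Finset.mem_univ, true_and] at hx hy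
      have := hg.2.2
      omega
    have h1 := card_bad' q hq0 (2*n) Y (hq.trans (by exact_mod_cast hYc)) hq1 w Finset.univ X (by simp)
      (Finset.subset_univ _) (Finset.subset_univ _) hXY hXc
    have h2 : (Finset.univ.filter (BadPair (n := n) s w (i, j))).card ≤
        (Finset.univ.filter fun C : ChordDiagram n => ∀ x ∈ X, C.1 x ∉ Y).card := by
      apply Finset.card_le_card
      intro C hC
      have hC := (Finset.mem_filter.1 hC).2.2
      rw [Finset.mem_filter]
      refine ⟨Finset.mem_univ _, fun x hx hy => hC ⟨x, ?_⟩⟩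
      simp only [hX, hY, Finset.mem_filter, Finset.mem_univ, true_and] at hx hy
      exact ⟨hx.1, hx.2, hy.1, hy.2⟩
    have h3 := h2.trans (card_CD_le X Y)
    have h4 : ((Finset.univ.filter (BadPair (n := n) s w (i, j))).card : ℝ) ≤ _ := (Nat.cast_le (α := ℝ)).2 h3
    refine h4.trans (h1.trans ?_)
    have h5 := le_card_CD (n := n)
    rw [Finset.card_univ, Fintype.card_fin]
    gcongr
  have hu := union_bound _ _ hP
  have hsub : (Finset.univ.filter fun C : ChordDiagram n => ¬ Mixing w s C) ⊆
      Finset.univ.filter fun C => ∃ p, BadPair s w p C := by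
    intro C hC
    rw [Finset.mem_filter] at hC ⊢
    refine ⟨hC.1, ?_⟩
    have hC := hC.2
    unfold Mixing at hC
    push Not at hC
    obtain ⟨i, j, hg, hx⟩ := hC
    have h1 : i < 2*n+1 := by have := hg.1; omega
    have h2 : j < 2*n+1 := by have := hg.2.1; omega
    refine ⟨(⟨i, h1⟩, ⟨j, h2⟩), hg, ?_⟩
    rintro ⟨x, a1, a2, a3, a4⟩
    exact absurd a4 (not_lt.2 (hx x a1 a2 a3))
  have h6 : ((Finset.univ.filter fun C : ChordDiagram n => ¬ Mixing w s C).card : ℝ) ≤ _ :=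
    (Nat.cast_le (α := ℝ)).2 (Finset.card_le_card hsub)
  refine h6.trans (hu.trans (le_of_eq ?_))
  simp only [Fintype.card_prod, Fintype.card_fin]
  push_cast
  ring

lemma probD_bound {m s w : ℕ} (hm : 1 ≤ m) (hs : 4 * m + 10 ≤ s)
    (hn : 100 * s ≤ n) (hw : 2 * w * w ≤ m) (q : ℝ) (hq0 : 3/4 ≤ q) (hq1 : q ≤ 1)
    (hq : (1 - q) * (2*n : ℕ) ≤ s) :
    1 - 2 * (2 * n + 1)^2 * q ^ w ≤ probD n (fun D =>
        StronglyConnectedIn D {x | 3 * m ≤ chordLength D.1 x}) := by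
  set E : OrientedChordDiagram n → Prop := fun D =>
        StronglyConnectedIn D {x | 3 * m ≤ chordLength D.1 x} with hE
  have hb : ((Finset.univ.filter fun D => ¬ E D).card : ℝ) ≤
      2 * (2 * n + 1)^2 * q ^ w * Fintype.card (OrientedChordDiagram n) := by
    set K : ℝ := ((Fintype.card (Fin (2*n) → Fin (2*n) → Bool) : ℕ) : ℝ) with hK
    have e1 : ((Finset.univ.filter fun D => ¬ E D).card : ℝ) =
        ∑ C : ChordDiagram n, ((Finset.univ.filter fun ω => ¬ E (C, ω)).card : ℝ) := by
      rw [Finset.card_filter, Fintype.sum_prod_type]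
      push_cast
      refine Finset.sum_congr rfl fun C _ => ?_
      rw [Finset.card_filter]
      push_cast
      rfl
    have e2 : ∀ C : ChordDiagram n, ((Finset.univ.filter fun ω => ¬ E (C, ω)).card : ℝ) ≤
        (2 * n + 1)^2 * q ^ w * K + (if ¬ Mixing w s C then K else 0) := by
      intro C
      by_cases hC : Mixing w s C
      · rw [if_neg (not_not.2 hC), add_zero]
        refine (coin_total C hm hs hn hw hC).trans ?_
        have : (3/4 : ℝ) ^ w ≤ q ^ w := by gcongr
        gcongr
        nlinarith
      · rw [if_pos hC]
        have h1 : ((Finset.univ.filter fun ω => ¬ E (C, ω)).card : ℝ) ≤ K := by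
          rw [hK, ← Finset.card_univ]
          exact_mod_cast Finset.card_filter_le _ _
        have h2 : 0 ≤ (2 * (n:ℝ) + 1)^2 * q ^ w * K := by positivity
        linarith
    rw [e1]
    refine (Finset.sum_le_sum fun C _ => e2 C).trans ?_
    rw [Finset.sum_add_distrib, ← Finset.sum_filter, Finset.sum_const, Finset.sum_const,
      nsmul_eq_mul, nsmul_eq_mul, Finset.card_univ, Fintype.card_prod]
    have h3 := mixing_bound (n := n) (s := s) (w := w) q (by linarith) hq1 hq
    have hK0 : 0 ≤ K := by positivity
    have h4 := mul_le_mul_of_nonneg_right h3 hK0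
    push_cast
    rw [← hK]
    linarith
  have hpos : (0:ℝ) < Fintype.card (OrientedChordDiagram n) := by
    rw [Fintype.card_prod]
    have h1 := (nuM_pos n).trans_le le_card_CD
    have h2 : 0 < Fintype.card (Fin (2*n) → Fin (2*n) → Bool) := Fintype.card_pos
    exact_mod_cast Nat.mul_pos h1 h2
  unfold probD
  rw [Finset.card_univ, le_div_iff₀ hpos]
  have h5 := Finset.card_filter_add_card_filter_not (s := (Finset.univ : Finset (OrientedChordDiagram n))) E
  have h6 : ((Finset.univ.filter E).card : ℝ) + (Finset.univ.filter fun D => ¬ E D).card =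
      Fintype.card (OrientedChordDiagram n) := by
    rw [← Finset.card_univ]
    exact_mod_cast h5
  linarith

lemma probD_le_one (E : OrientedChordDiagram n → Prop) : probD n E ≤ 1 := by
  unfold probD
  apply div_le_one_of_le₀
  · exact_mod_cast Finset.card_filter_le _ _
  · positivity

end Diagram2

/-- the scale parameter -/
noncomputable def mN (n : ℕ) : ℕ := ⌊(n:ℝ) ^ ((1:ℝ)/3)⌋₊

lemma mN_tendsto : Filter.Tendsto mN Filter.atTop Filter.atTop := by
  unfold mN
  exact tendsto_nat_floor_atTop.comp
    ((tendsto_rpow_atTop (by norm_num)).comp tendsto_natCast_atTop_atTop)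

lemma mN_pow_le (n : ℕ) : (mN n) ^ 3 ≤ n := by
  have h : (mN n : ℝ) ≤ (n:ℝ) ^ ((1:ℝ)/3) := Nat.floor_le (by positivity)
  have h2 : (mN n : ℝ) ^ 3 ≤ ((n:ℝ) ^ ((1:ℝ)/3)) ^ 3 := by gcongr
  rw [← Real.rpow_mul_natCast (by positivity)] at h2
  norm_num at h2
  exact_mod_cast h2

lemma lt_mN_pow (n : ℕ) : n < (mN n + 1) ^ 3 := by
  have h : (n:ℝ) ^ ((1:ℝ)/3) < mN n + 1 := Nat.lt_floor_add_one _
  have h2 : ((n:ℝ) ^ ((1:ℝ)/3)) ^ 3 < ((mN n : ℝ) + 1) ^ 3 := by gcongr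
  rw [← Real.rpow_mul_natCast (by positivity)] at h2
  norm_num at h2
  exact_mod_cast h2

/-- number of blocks -/
noncomputable def wN (n : ℕ) : ℕ := Nat.sqrt (mN n) / 2

lemma wN_tendsto : Filter.Tendsto wN Filter.atTop Filter.atTop := by
  have h1 : Filter.Tendsto (fun k => Nat.sqrt k / 2) Filter.atTop Filter.atTop := by
    rw [Filter.tendsto_atTop]
    intro b
    filter_upwards [Filter.eventually_ge_atTop ((2*b)*(2*b))] with k hk
    have := Nat.le_sqrt.2 hk
    omega
  exact h1.comp mN_tendsto

lemma n_le_wN (n : ℕ) : n ≤ (2 * (wN n + 1)) ^ 6 := by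
  have h1 := lt_mN_pow n
  have h3 : mN n + 1 ≤ (2 * (wN n + 1)) ^ 2 := by
    have h4 := Nat.lt_succ_sqrt (mN n)
    have h5 : Nat.sqrt (mN n) + 1 ≤ 2 * (wN n + 1) := by unfold wN; omega
    have h6 := Nat.mul_le_mul h5 h5
    simp only [Nat.succ_eq_add_one] at h4
    nlinarith
  calc n ≤ (mN n + 1) ^ 3 := h1.le
    _ ≤ ((2 * (wN n + 1)) ^ 2) ^ 3 := by gcongr
    _ = _ := by ring

lemma eps_tendsto : Filter.Tendsto (fun n : ℕ => 2 * (2 * (n:ℝ) + 1)^2 * (399/400 : ℝ) ^ (wN n))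
    Filter.atTop (nhds 0) := by
  have h1 := tendsto_pow_const_mul_const_pow_of_abs_lt_one 12 (r := (399/400:ℝ)) (by
    rw [abs_of_pos] <;> norm_num)
  have h2 := (h1.comp ((Filter.tendsto_add_atTop_nat 1).comp wN_tendsto)).const_mul
    (2 * 9 * 4096 * (400/399 : ℝ))
  rw [mul_zero] at h2
  refine tendsto_of_tendsto_of_tendsto_of_le_of_le' tendsto_const_nhds h2
    (Filter.Eventually.of_forall fun n => by positivity) ?_
  filter_upwards [Filter.eventually_ge_atTop 1] with n hn
  have hn' : (1:ℝ) ≤ n := by exact_mod_cast hn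
  have h3 : (n:ℝ) ≤ (2 * ((wN n : ℝ) + 1)) ^ 6 := by exact_mod_cast n_le_wN n
  have h4 : (2 * (n:ℝ) + 1)^2 ≤ 9 * 4096 * ((wN n : ℝ) + 1) ^ 12 := by
    calc (2 * (n:ℝ) + 1)^2 ≤ (3 * n) ^ 2 := by gcongr; linarith
      _ ≤ (3 * (2 * ((wN n : ℝ) + 1)) ^ 6) ^ 2 := by gcongr
      _ = _ := by ring
  simp only [Function.comp_apply, pow_succ (399/400 : ℝ) (wN n)]
  push_cast
  calc 2 * (2 * (n:ℝ) + 1)^2 * (399/400 : ℝ) ^ (wN n)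
      ≤ 2 * (9 * 4096 * ((wN n : ℝ) + 1) ^ 12) * (399/400 : ℝ) ^ (wN n) := by gcongr
    _ = _ := by ring

theorem stmt12 :
    Filter.Tendsto
      (fun n : ℕ => probD n (fun D =>
        StronglyConnectedIn D {x | 3 * ⌊(n:ℝ) ^ ((1:ℝ)/3)⌋₊ ≤ chordLength D.1 x}))
      Filter.atTop (nhds 1) := by
  have h0 := (tendsto_const_nhds (x := (1:ℝ))).sub eps_tendsto
  rw [sub_zero] at h0
  refine tendsto_of_tendsto_of_tendsto_of_le_of_le' h0 tendsto_const_nhds ?_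
    (Filter.Eventually.of_forall fun n => probD_le_one _)
  filter_upwards [mN_tendsto.eventually_ge_atTop 40] with n hm
  have hp := mN_pow_le n
  have hp2 : 1600 * mN n ≤ n := by
    have : 40 * 40 * mN n ≤ mN n * mN n * mN n := by gcongr
    calc 1600 * mN n ≤ mN n * mN n * mN n := by linarith
      _ = mN n ^ 3 := by ring
      _ ≤ n := hp
  apply probD_bound (m := mN n) (s := n / 100) (w := wN n) (by omega) (by omega) (by omega)
  · have h1 := Nat.sqrt_le (mN n)
    have h2 : 2 * wN n ≤ Nat.sqrt (mN n) := by unfold wN; omega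
    have h3 := Nat.mul_le_mul h2 h2
    nlinarith
  · norm_num
  · norm_num
  · have : n ≤ 200 * (n / 100) := by omega
    have h : (n:ℝ) ≤ 200 * ((n/100 : ℕ) : ℝ) := by exact_mod_cast this
    push_cast
    linarith
end

section
/- With high probability, the set Len_{⌈2 log n⌉} of chords of D_n of length at least 2 log n (natural logarithm) is strongly connected as a subdiagram of the random oriented chord diagram D_n: for any two chords c, d of length at least 2 log n there is a directed path from c to d in the directed intersection graph of D_n using only chords of length at least 2 log n. -/
open scoped Classical
open Finset Filter

section matchings
variable {α : Type*} [Fintype α] [DecidableEq α]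

/-- Matchings of the point set `S`, extended by the identity. -/
noncomputable def Mat (S : Finset α) : Finset (α → α) :=
  univ.filter fun f => (∀ i, f (f i) = i) ∧ ∀ i, f i ≠ i ↔ i ∈ S

lemma mem_Mat {S : Finset α} {f : α → α} :
    f ∈ Mat S ↔ (∀ i, f (f i) = i) ∧ ∀ i, f i ≠ i ↔ i ∈ S := by simp [Mat]

/-- Cut the pair `a, v`. -/
noncomputable def cutF (a v : α) (f : α → α) : α → α := fun i => if i = a ∨ i = v then i else f i
/-- Glue the pair `a, v`. -/
noncomputable def glueF (a v : α) (f : α → α) : α → α :=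
  fun i => if i = a then v else if i = v then a else f i

lemma sum_Mat_fiber {S : Finset α} {a v : α} (ha : a ∈ S) (hv : v ∈ S) (hav : v ≠ a)
    (g h : (α → α) → ℝ)
    (hgh : ∀ f ∈ Mat S, f a = v → g f = h (cutF a v f)) :
    ∑ f ∈ (Mat S).filter (fun f => f a = v), g f = ∑ f ∈ Mat ((S.erase a).erase v), h f := by
  refine Finset.sum_bij' (fun f _ => cutF a v f) (fun f _ => glueF a v f) ?_ ?_ ?_ ?_ ?_
  · intro f hf
    rw [mem_filter, mem_Mat] at hf
    obtain ⟨⟨h1, h2⟩, h3⟩ := hf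
    have h4 : f v = a := by rw [← h3, h1]
    rw [mem_Mat]
    constructor
    · intro i
      by_cases hi : i = a ∨ i = v
      · simp [cutF, hi]
      · have : ¬ (f i = a ∨ f i = v) := by
          rintro (h | h)
          · exact hi (Or.inr (by rw [← h1 i, h, h3]))
          · exact hi (Or.inl (by rw [← h1 i, h, h4]))
        simp [cutF, hi, this, h1]
    · intro i
      by_cases hi : i = a ∨ i = v
      · simp only [cutF, hi, if_true]
        rcases hi with rfl | rfl <;> simp
      · have := h2 i
        push Not at hi
        simp [cutF, hi, ← this]
  · intro f hf
    rw [mem_Mat] at hf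
    obtain ⟨h1, h2⟩ := hf
    have e1 : f a = a := by by_contra h; have := (h2 a).1 h; simp at this
    have e2 : f v = v := by by_contra h; have := (h2 v).1 h; simp at this
    rw [mem_filter, mem_Mat]
    refine ⟨⟨?_, ?_⟩, by simp [glueF]⟩
    · intro i
      by_cases hi : i = a
      · simp [glueF, hi, hav]
      by_cases hi' : i = v
      · simp [glueF, hi', hav]
      have n1 : f i ≠ a := fun h => hi (by rw [← h1 i, h, e1])
      have n2 : f i ≠ v := fun h => hi' (by rw [← h1 i, h, e2])
      simp [glueF, hi, hi', n1, n2, h1]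
    · intro i
      by_cases hi : i = a
      · simp [glueF, hi, hav, ha]
      by_cases hi' : i = v
      · simp [glueF, hi', hav, hv, Ne.symm hav]
      have := h2 i
      simp [glueF, hi, hi'] at this ⊢
      exact this
  · intro f hf
    rw [mem_filter, mem_Mat] at hf
    obtain ⟨⟨h1, h2⟩, h3⟩ := hf
    have h4 : f v = a := by rw [← h3, h1]
    funext i
    by_cases hi : i = a
    · simp [glueF, hi, h3]
    by_cases hi' : i = v
    · simp [glueF, hi', hav, h4]
    simp [glueF, cutF, hi, hi']
  · intro f hf
    rw [mem_Mat] at hf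
    obtain ⟨h1, h2⟩ := hf
    have e1 : f a = a := by by_contra h; have := (h2 a).1 h; simp at this
    have e2 : f v = v := by by_contra h; have := (h2 v).1 h; simp at this
    funext i
    by_cases hi : i = a
    · simp [cutF, hi, e1]
    by_cases hi' : i = v
    · simp [cutF, hi', e2]
    simp [glueF, cutF, hi, hi']
  · intro f hf
    rw [mem_filter] at hf
    exact hgh f hf.1 hf.2

lemma sum_Mat_rec {S : Finset α} {a : α} (ha : a ∈ S) (g : (α → α) → ℝ) (h : α → (α → α) → ℝ)
    (hgh : ∀ v ∈ S.erase a, ∀ f ∈ Mat S, f a = v → g f = h v (cutF a v f)) :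
    ∑ f ∈ Mat S, g f = ∑ v ∈ S.erase a, ∑ f ∈ Mat ((S.erase a).erase v), h v f := by
  have hmap : ∀ f ∈ Mat S, f a ∈ S.erase a := by
    intro f hf
    rw [mem_Mat] at hf
    have h1 := (hf.2 a).2 ha
    rw [mem_erase]
    exact ⟨h1, (hf.2 (f a)).1 (by rw [hf.1 a]; exact fun h => h1 h.symm)⟩
  rw [← Finset.sum_fiberwise_of_maps_to hmap]
  refine Finset.sum_congr rfl fun v hv => ?_
  rw [mem_erase] at hv
  exact sum_Mat_fiber ha hv.2 hv.1 g (h v) (fun f hf hfa => hgh v (by simp [hv]) f hf hfa)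

/-- Number of matchings on `k` points. -/
def DF : ℕ → ℕ
  | 0 => 1
  | 1 => 0
  | (k+2) => (k+1) * DF k

lemma card_Mat (k : ℕ) : ∀ S : Finset α, S.card = k → ((Mat S).card : ℝ) = DF k := by
  induction k using Nat.strong_induction_on with
  | _ k ih =>
    intro S hS
    rcases S.eq_empty_or_nonempty with rfl | ⟨a, ha⟩
    · simp at hS; subst hS
      have : Mat (∅ : Finset α) = {id} := by
        ext f; rw [mem_Mat]; simp
        constructor
        · rintro ⟨_, h⟩; funext i; simp [h]
        · rintro rfl; simp
      simp [this, DF]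
    · have h1 := sum_Mat_rec ha (fun _ => 1) (fun _ _ => 1) (by intros; rfl)
      have hk : (S.erase a).card = k - 1 := by rw [card_erase_of_mem ha, hS]
      have hpos : 0 < k := hS ▸ card_pos.2 ⟨a, ha⟩
      rw [sum_const, nsmul_eq_mul, mul_one] at h1
      rw [h1]
      have h2 : ∀ v ∈ S.erase a, ∑ f ∈ Mat ((S.erase a).erase v), (1:ℝ) = DF (k - 2) := by
        intro v hv
        rw [sum_const, nsmul_eq_mul, mul_one]
        exact ih (k-2) (by omega) _ (by rw [card_erase_of_mem hv, hk]; omega)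
      rw [sum_congr rfl h2, sum_const, nsmul_eq_mul, hk]
      match k, hpos with
      | 1, _ => simp [DF]
      | (k+2), _ => simp [DF]

lemma DF_succ (k : ℕ) (hk : 0 < k) : (DF k : ℝ) = ((k:ℝ) - 1) * DF (k-2) := by
  match k, hk with
  | 1, _ => simp [DF]
  | (k+2), _ => simp [DF]; left; ring

lemma DF_pos (k : ℕ) : 0 < DF (2*k) := by
  induction k with
  | zero => simp [DF]
  | succ k ih => rw [mul_add]; simp [DF, ih]

/-- Main exponential moment bound. -/
lemma moment (θ ρ : ℝ) (hθ0 : 0 ≤ θ) (hρ0 : 1/2 ≤ ρ) (hρ1 : ρ ≤ 1) (k : ℕ) :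
    ∀ S P Q : Finset α, S.card = k → P ⊆ S → Q ⊆ S → Disjoint P Q →
      (1 - ρ) * ((k:ℝ) - 1) ≤ (1 - θ) * Q.card - ((P.card : ℝ) - 1) →
      ∑ f ∈ Mat S, θ ^ (P.filter fun i => f i ∈ Q).card ≤ ρ ^ P.card * DF k := by
  induction k using Nat.strong_induction_on with
  | _ k ih =>
    intro S P Q hS hP hQ hPQ hcond
    rcases P.eq_empty_or_nonempty with rfl | ⟨a, haP⟩
    · simp [← card_Mat k S hS]
    have ha : a ∈ S := hP haP
    have haQ : a ∉ Q := disjoint_left.1 hPQ haP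
    have hkpos : 0 < k := hS ▸ card_pos.2 ⟨a, ha⟩
    have hk : (S.erase a).card = k - 1 := by rw [card_erase_of_mem ha, hS]
    have hp : 0 < P.card := card_pos.2 ⟨a, haP⟩
    rw [sum_Mat_rec ha _ (fun v f => (if v ∈ Q then θ else 1) *
      θ ^ (((P.erase a).erase v).filter fun i => f i ∈ Q.erase v).card)]
    swap
    · intro v hv f hf hfa
      rw [mem_Mat] at hf
      rw [mem_erase] at hv
      have h4 : f v = a := by rw [← hfa, hf.1]
      have key : ((P.erase a).erase v).filter (fun i => cutF a v f i ∈ Q.erase v)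
          = (P.filter fun i => f i ∈ Q).erase a := by
        ext i
        simp only [mem_filter, mem_erase]
        by_cases hi : i = a
        · simp [hi]
        by_cases hi' : i = v
        · subst hi'; simp [h4, haQ]
        have : f i ≠ v := fun h => hi (by rw [← hf.1 i, h, h4])
        simp [cutF, hi, hi', this]
      rw [key]
      by_cases hvQ : v ∈ Q
      · have hm : a ∈ P.filter fun i => f i ∈ Q := by simp [haP, hfa, hvQ]
        rw [if_pos hvQ, ← pow_succ', card_erase_add_one hm]
      · have hm : a ∉ P.filter fun i => f i ∈ Q := by simp [hfa, hvQ]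
        rw [if_neg hvQ, erase_eq_of_notMem hm, one_mul]
    have step : ∀ v ∈ S.erase a, ∑ f ∈ Mat ((S.erase a).erase v), (if v ∈ Q then θ else 1) *
        θ ^ (((P.erase a).erase v).filter fun i => f i ∈ Q.erase v).card
        ≤ (ρ ^ (P.card - 1) - (if v ∈ Q then (1 - θ) * ρ ^ (P.card - 1) else 0)
          + (if v ∈ P.erase a then ρ ^ (P.card - 1) else 0)) * DF (k-2) := by
      intro v hv
      have hk2 : 2 ≤ k := by
        have := card_pos.2 ⟨v, hv⟩; omega
      rw [← mul_sum]
      have hc : ((S.erase a).erase v).card = k - 2 := by rw [card_erase_of_mem hv, hk]; omega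
      have hcast : ((k - 2 : ℕ) : ℝ) = k - 2 := by push_cast [hk2]; ring
      have hD : (0:ℝ) ≤ DF (k-2) := Nat.cast_nonneg _
      have hPe : (P.erase a).card = P.card - 1 := card_erase_of_mem haP
      have IH := ih (k-2) (by omega) ((S.erase a).erase v) ((P.erase a).erase v) (Q.erase v) hc
        (erase_subset_erase _ (erase_subset_erase _ hP))
        (fun i hi => by
          rw [mem_erase] at hi
          simp only [mem_erase]
          exact ⟨hi.1, fun h => haQ (h ▸ hi.2), hQ hi.2⟩)
        (Disjoint.mono ((erase_subset _ _).trans (erase_subset _ _)) (erase_subset _ _) hPQ)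
      by_cases hvQ : v ∈ Q
      · have hvP : v ∉ P.erase a := fun h => disjoint_left.1 hPQ (mem_of_mem_erase h) hvQ
        have hqp : 0 < Q.card := card_pos.2 ⟨v, hvQ⟩
        rw [erase_eq_of_notMem hvP, hPe, card_erase_of_mem hvQ, hcast] at IH
        rw [if_pos hvQ, if_pos hvQ, if_neg hvP, erase_eq_of_notMem hvP]
        have := IH (by push_cast [Nat.one_le_iff_ne_zero.2 hqp.ne', Nat.one_le_iff_ne_zero.2 hp.ne']; nlinarith)
        calc _ ≤ θ * (ρ ^ (P.card - 1) * DF (k-2)) := by gcongr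
          _ = _ := by ring
      · rw [if_neg hvQ, if_neg hvQ, one_mul]
        rw [erase_eq_of_notMem hvQ] at IH ⊢
        by_cases hvP : v ∈ P.erase a
        · have hp1 : 0 < (P.erase a).card := card_pos.2 ⟨v, hvP⟩
          have hp2 : 2 ≤ P.card := by omega
          rw [card_erase_of_mem hvP, hPe, hcast] at IH
          have := IH (by
            have : ((P.card - 1 - 1 : ℕ) : ℝ) = P.card - 2 := by
              rw [Nat.sub_sub]; push_cast [hp2]; ring
            rw [this]; nlinarith)
          rw [if_pos hvP]
          refine this.trans ?_
          gcongr
          have e : P.card - 1 = (P.card - 1 - 1) + 1 := by omega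
          have : (0:ℝ) ≤ ρ ^ (P.card - 1 - 1) := by positivity
          rw [e, pow_succ, Nat.add_sub_cancel]
          nlinarith
        · rw [if_neg hvP]
          rw [erase_eq_of_notMem hvP, hPe, hcast] at IH
          rw [erase_eq_of_notMem hvP]
          have := IH (by push_cast [Nat.one_le_iff_ne_zero.2 hp.ne']; nlinarith)
          simpa using this
    refine (sum_le_sum step).trans ?_
    rw [← sum_mul, sum_add_distrib, sum_sub_distrib, sum_const, ← sum_filter, ← sum_filter,
      sum_const, sum_const]
    have f1 : (S.erase a).filter (· ∈ Q) = Q := by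
      ext i; simp only [mem_filter, mem_erase]
      exact ⟨fun h => h.2, fun h => ⟨⟨fun e => haQ (e ▸ h), hQ h⟩, h⟩⟩
    have f2 : (S.erase a).filter (· ∈ P.erase a) = P.erase a := by
      ext i; simp only [mem_filter, mem_erase]
      exact ⟨fun h => h.2, fun h => ⟨⟨h.1, hP h.2⟩, h⟩⟩
    rw [f1, f2, hk, card_erase_of_mem haP, DF_succ k hkpos, ← mul_assoc]
    have hD : (0:ℝ) ≤ DF (k-2) := Nat.cast_nonneg _
    gcongr
    simp only [nsmul_eq_mul]
    push_cast [Nat.one_le_iff_ne_zero.2 hkpos.ne', Nat.one_le_iff_ne_zero.2 hp.ne']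
    have e : ρ ^ P.card = ρ ^ (P.card - 1) * ρ := by rw [← pow_succ]; congr 1; omega
    rw [e]
    have : (0:ℝ) ≤ ρ ^ (P.card - 1) := by positivity
    nlinarith
end matchings

section coins
variable {α τ : Type*} [DecidableEq α]

/-- Flip one coin. -/
noncomputable def flipB (k : α × α) (b : α → α → Bool) : α → α → Bool :=
  fun i j => if i = k.1 ∧ j = k.2 then !(b i j) else b i j

lemma flipB_flipB (k : α × α) (b : α → α → Bool) : flipB k (flipB k b) = b := by
  funext i j; by_cases h : i = k.1 ∧ j = k.2 <;> simp [flipB, h]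

lemma flipB_same (k : α × α) (b : α → α → Bool) : flipB k b k.1 k.2 = !(b k.1 k.2) := by
  simp [flipB]

lemma flipB_ne (k l : α × α) (h : l ≠ k) (b : α → α → Bool) : flipB k b l.1 l.2 = b l.1 l.2 := by
  have : ¬ (l.1 = k.1 ∧ l.2 = k.2) := fun h' => h (Prod.ext h'.1 h'.2)
  simp [flipB, this]

lemma flip_half [Fintype α] (S : Finset (α → α → Bool)) (k : α × α) (v : Bool)
    (hS : ∀ b ∈ S, flipB k b ∈ S) :
    2 * (S.filter fun b => b k.1 k.2 = v).card = S.card := by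
  have h1 : (S.filter fun b => b k.1 k.2 = v).card = (S.filter fun b => ¬ b k.1 k.2 = v).card := by
    refine card_bij' (fun b _ => flipB k b) (fun b _ => flipB k b) ?_ ?_ ?_ ?_
    · intro b hb
      rw [mem_filter] at hb ⊢
      exact ⟨hS b hb.1, by rw [flipB_same, hb.2]; cases v <;> simp⟩
    · intro b hb
      rw [mem_filter] at hb ⊢
      exact ⟨hS b hb.1, by rw [flipB_same]; have := hb.2; revert this; cases v <;> cases b k.1 k.2 <;> simp⟩
    · intros; exact flipB_flipB _ _
    · intros; exact flipB_flipB _ _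
  have := card_filter_add_card_filter_not (s := S) (fun b => b k.1 k.2 = v)
  omega

lemma coin1 [Fintype α] (T : Finset τ) (κ : τ → α × α) (v : τ → Bool) (hκ : Set.InjOn κ T) :
    ((univ.filter fun b : α → α → Bool => ∀ e ∈ T, ¬ b (κ e).1 (κ e).2 = v e).card : ℝ)
      ≤ (1/2) ^ T.card * Fintype.card (α → α → Bool) := by
  induction T using Finset.induction_on with
  | empty => simp
  | insert e T he ih =>
    have ih := ih (hκ.mono (by simp))
    set S := univ.filter fun b : α → α → Bool => ∀ e ∈ T, ¬ b (κ e).1 (κ e).2 = v e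
    have h := flip_half S (κ e) (!(v e)) (by
      intro b hb
      simp only [S, mem_filter, mem_univ, true_and] at hb ⊢
      intro e' he'
      rw [flipB_ne]
      · exact hb e' he'
      · intro h
        exact he (hκ (by simp [he']) (by simp) h ▸ he'))
    have e2 : (univ.filter fun b : α → α → Bool => ∀ e' ∈ insert e T, ¬ b (κ e').1 (κ e').2 = v e')
        = S.filter fun b => b (κ e).1 (κ e).2 = !(v e) := by
      ext b
      simp only [S, mem_filter, mem_univ, true_and, forall_mem_insert]
      rw [and_comm]
      refine and_congr_right fun _ => ?_
      cases b (κ e).1 (κ e).2 <;> cases v e <;> simp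
    rw [e2, card_insert_of_notMem he, pow_succ]
    have h' : (2:ℝ) * (S.filter fun b => b (κ e).1 (κ e).2 = !(v e)).card = S.card := by exact_mod_cast h
    linarith

lemma coin2 [Fintype α] (T : Finset τ) (κ μ : τ → α × α) (v w : τ → Bool) (hκ : Set.InjOn κ T)
    (hμ : Set.InjOn μ T) (hd : ∀ e ∈ T, ∀ e' ∈ T, κ e ≠ μ e') :
    ((univ.filter fun b : α → α → Bool => ∀ e ∈ T, ¬ (b (κ e).1 (κ e).2 = v e ∧
        b (μ e).1 (μ e).2 = w e)).card : ℝ)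
      ≤ (3/4) ^ T.card * Fintype.card (α → α → Bool) := by
  induction T using Finset.induction_on with
  | empty => simp
  | insert e T he ih =>
    have ih := ih (hκ.mono (by simp)) (hμ.mono (by simp))
      (fun e he e' he' => hd e (by simp [he]) e' (by simp [he']))
    set S := univ.filter fun b : α → α → Bool => ∀ e ∈ T, ¬ (b (κ e).1 (κ e).2 = v e ∧
        b (μ e).1 (μ e).2 = w e)
    have h := flip_half S (κ e) (v e) (by
      intro b hb
      simp only [S, mem_filter, mem_univ, true_and] at hb ⊢
      intro e' he'
      rw [flipB_ne, flipB_ne]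
      · exact hb e' he'
      · exact fun h => hd e (by simp) e' (by simp [he']) h.symm
      · intro h
        exact he (hκ (by simp [he']) (by simp) h ▸ he'))
    have h2 := flip_half (S.filter fun b => b (κ e).1 (κ e).2 = v e) (μ e) (w e) (by
      intro b hb
      simp only [S, mem_filter, mem_univ, true_and] at hb ⊢
      rw [flipB_ne _ _ (hd e (by simp) e (by simp))]
      refine ⟨?_, hb.2⟩
      intro e' he'
      rw [flipB_ne, flipB_ne]
      · exact hb.1 e' he'
      · intro h
        exact he (hμ (by simp [he']) (by simp) h ▸ he')
      · exact fun h => hd e' (by simp [he']) e (by simp) h)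
    have e2 : (univ.filter fun b : α → α → Bool => ∀ e' ∈ insert e T, ¬ (b (κ e').1 (κ e').2 = v e' ∧
        b (μ e').1 (μ e').2 = w e'))
        = S.filter fun b => ¬ (b (κ e).1 (κ e).2 = v e ∧ b (μ e).1 (μ e).2 = w e) := by
      ext b
      simp only [S, mem_filter, mem_univ, true_and, forall_mem_insert]
      exact and_comm
    have h3 := card_filter_add_card_filter_not (s := S)
      (fun b => b (κ e).1 (κ e).2 = v e ∧ b (μ e).1 (μ e).2 = w e)
    rw [filter_filter] at h2
    rw [e2, card_insert_of_notMem he, pow_succ]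
    have h' : (4:ℝ) * (S.filter fun b => ¬ (b (κ e).1 (κ e).2 = v e ∧ b (μ e).1 (μ e).2 = w e)).card
      = 3 * S.card := by
      norm_cast; omega
    linarith
end coins

section geometry

/-- Circular distance. -/
def cdi (N i x : ℕ) : ℕ := min (max i x - min i x) (N - (max i x - min i x))

lemma xo_iff (a b : Prop) : Xor' a b ↔ (a ∧ ¬ b) ∨ (b ∧ ¬ a) := Iff.rfl

lemma between_iff {N : ℕ} (a b c : Fin N) : Between a b c ↔
    ((a:ℕ) < c ∧ (c:ℕ) < b) ∨ ((b:ℕ) < c ∧ (c:ℕ) < a) := by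
  simp only [Between, min_lt_iff, lt_max_iff, Fin.lt_def]
  omega

/-- The pair `x, y` separates `i` from `j`. -/
def Sepa {N : ℕ} (x y i j : Fin N) : Prop := Xor' (Between x y i) (Between x y j)

lemma len_iff {n : ℕ} (C : ChordDiagram n) (x : Fin (2*n)) (k : ℕ) :
    k ≤ chordLength C x ↔ k + 1 ≤ cdi (2*n) x (C.1 x) := by
  have h := C.2.2 x
  have h' : (C.1 x : ℕ) ≠ x := fun e => h (Fin.ext e)
  have := (C.1 x).2
  have := x.2
  simp only [chordLength, cdi]
  omega

lemma cdi_comm (N i x : ℕ) : cdi N i x = cdi N x i := by simp only [cdi]; rw [max_comm, min_comm i x]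

lemma len_inv {n : ℕ} (C : ChordDiagram n) (x : Fin (2*n)) :
    chordLength C (C.1 x) = chordLength C x := by
  simp only [chordLength, C.2.1 x, max_comm, min_comm]

lemma between_swap {N : ℕ} (a b c : Fin N) : Between b a c ↔ Between a b c := by
  simp only [between_iff]; omega

lemma crosses_left {n : ℕ} (C : ChordDiagram n) (x u : Fin (2*n)) :
    Crosses C (C.1 x) u ↔ Crosses C x u := by
  simp only [Crosses, C.2.1 x, between_swap]

lemma crosses_right {n : ℕ} (C : ChordDiagram n) (x u : Fin (2*n)) :
    Crosses C x (C.1 u) ↔ Crosses C x u := by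
  simp only [Crosses, C.2.1 u]
  rw [xo_iff, xo_iff, or_comm]

lemma rep_inv {n : ℕ} (C : ChordDiagram n) (x : Fin (2*n)) : chordRep C (C.1 x) = chordRep C x := by
  simp only [chordRep, C.2.1 x, min_comm]

lemma over_left {n : ℕ} (D : OrientedChordDiagram n) (x u : Fin (2*n)) :
    OverD D (D.1.1 x) u ↔ OverD D x u := by
  simp only [OverD, crosses_left, rep_inv]

lemma over_right {n : ℕ} (D : OrientedChordDiagram n) (x u : Fin (2*n)) :
    OverD D x (D.1.1 u) ↔ OverD D x u := by
  simp only [OverD, crosses_right, rep_inv]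

lemma crosses_symm {n : ℕ} (C : ChordDiagram n) (x u : Fin (2*n)) (h : Crosses C x u) :
    Crosses C u x := by
  have h1 : (C.1 x : ℕ) ≠ x := fun e => C.2.2 x (Fin.ext e)
  have h2 : (C.1 u : ℕ) ≠ u := fun e => C.2.2 u (Fin.ext e)
  have h3 : (C.1 x : ℕ) = u ↔ (x : ℕ) = C.1 u := by
    rw [← Fin.ext_iff, ← Fin.ext_iff]
    exact ⟨fun e => by rw [← e, C.2.1], fun e => by rw [e, C.2.1]⟩
  have h4 : (C.1 x : ℕ) = C.1 u ↔ (x : ℕ) = u := by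
    rw [← Fin.ext_iff, ← Fin.ext_iff]
    exact ⟨fun e => by rw [← C.2.1 x, e, C.2.1], fun e => by rw [e]⟩
  simp only [Crosses, between_iff, xo_iff] at h ⊢
  omega

lemma rep_eq {n : ℕ} (C : ChordDiagram n) (x u : Fin (2*n)) (h : chordRep C x = chordRep C u) :
    u = x ∨ u = C.1 x := by
  simp only [chordRep] at h
  have a1 : C.1 x = C.1 u → x = u := fun e => by rw [← C.2.1 x, e, C.2.1]
  have a2 : x = C.1 u → C.1 x = u := fun e => by rw [e, C.2.1]
  rcases min_choice x (C.1 x) with e | e <;> rcases min_choice u (C.1 u) with e' | e' <;>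
    rw [e, e'] at h
  · exact Or.inl h.symm
  · exact Or.inr (a2 h).symm
  · exact Or.inr h.symm
  · exact Or.inl (a1 h).symm

lemma crosses_rep_ne {n : ℕ} (C : ChordDiagram n) (x u : Fin (2*n)) (h : Crosses C x u) :
    chordRep C x ≠ chordRep C u := by
  intro e
  rcases rep_eq C x u e with rfl | rfl
  · simp only [Crosses, between_iff, xo_iff] at h; omega
  · simp only [Crosses, between_iff, xo_iff, C.2.1] at h; omega

/-- Coin coordinate of a pair of chords. -/
noncomputable def kap {n : ℕ} (C : ChordDiagram n) (x u : Fin (2*n)) : Fin (2*n) × Fin (2*n) :=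
  (min (chordRep C x) (chordRep C u), max (chordRep C x) (chordRep C u))

lemma kap_inj {n : ℕ} (C : ChordDiagram n) (x u w z : Fin (2*n)) (h : kap C x u = kap C w z) :
    (chordRep C x = chordRep C w ∧ chordRep C u = chordRep C z) ∨
    (chordRep C x = chordRep C z ∧ chordRep C u = chordRep C w) := by
  simp only [kap, Prod.mk.injEq, Fin.ext_iff, Fin.coe_min, Fin.coe_max] at h ⊢
  omega

lemma over_iff {n : ℕ} (C : ChordDiagram n) (b : Fin (2*n) → Fin (2*n) → Bool) (x u : Fin (2*n))
    (h : Crosses C x u) : OverD (C, b) x u ↔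
      b (kap C x u).1 (kap C x u).2 = decide (chordRep C x ≤ chordRep C u) := by
  simp only [OverD, h, true_and, kap]
  by_cases hle : chordRep C x ≤ chordRep C u
  · simp [hle]
  · have hlt : chordRep C u < chordRep C x := not_le.1 hle
    simp [hle, hlt, min_eq_right hlt.le, max_eq_left hlt.le]

lemma rep_injOn {n : ℕ} (C : ChordDiagram n) (P Q : Finset (Fin (2*n))) (hPQ : Disjoint P Q)
    (i j : Fin (2*n)) (hi : i ∈ P.filter fun i => C.1 i ∈ Q) (hj : j ∈ P.filter fun i => C.1 i ∈ Q)
    (h : chordRep C i = chordRep C j) : i = j := by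
  rw [mem_filter] at hi hj
  rcases rep_eq C i j h with e | e
  · exact e.symm
  · exact absurd hi.2 (disjoint_left.1 hPQ (e ▸ hj.1))

lemma countB {n : ℕ} (C : ChordDiagram n) (x : Fin (2*n)) (P Q : Finset (Fin (2*n)))
    (hPQ : Disjoint P Q) (hs : ∀ i ∈ P, ∀ j ∈ Q, Sepa x (C.1 x) i j) :
    ((univ.filter fun b : Fin (2*n) → Fin (2*n) → Bool =>
      ∀ i ∈ P, C.1 i ∈ Q → ¬ OverD (C, b) x i).card : ℝ) ≤
      (1/2) ^ (P.filter fun i => C.1 i ∈ Q).card *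
        Fintype.card (Fin (2*n) → Fin (2*n) → Bool) := by
  have hc : ∀ i ∈ P.filter (fun i => C.1 i ∈ Q), Crosses C x i := by
    intro i hi; rw [mem_filter] at hi; exact hs i hi.1 _ hi.2
  refine le_trans ?_ (coin1 (P.filter fun i => C.1 i ∈ Q) (kap C x)
    (fun u => decide (chordRep C x ≤ chordRep C u)) ?_)
  · refine Nat.cast_le.2 (card_le_card ?_)
    intro b hb
    rw [mem_filter] at hb
    refine (@Finset.mem_filter _ _ (_) _ _).2 ⟨mem_univ _, fun e he => ?_⟩
    rw [← over_iff C b x e (hc e he)]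
    rw [mem_filter] at he
    exact hb.2 e he.1 he.2
  · intro i hi j hj h
    have := crosses_rep_ne C x i (hc i hi)
    have := crosses_rep_ne C x j (hc j hj)
    apply rep_injOn C P Q hPQ i j hi hj
    rcases kap_inj C _ _ _ _ h with h | h
    · exact h.2
    · exact absurd h.1 (by assumption)

lemma countB' {n : ℕ} (C : ChordDiagram n) (x : Fin (2*n)) (P Q : Finset (Fin (2*n)))
    (hPQ : Disjoint P Q) (hs : ∀ i ∈ P, ∀ j ∈ Q, Sepa x (C.1 x) i j) :
    ((univ.filter fun b : Fin (2*n) → Fin (2*n) → Bool =>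
      ∀ i ∈ P, C.1 i ∈ Q → ¬ OverD (C, b) i x).card : ℝ) ≤
      (1/2) ^ (P.filter fun i => C.1 i ∈ Q).card *
        Fintype.card (Fin (2*n) → Fin (2*n) → Bool) := by
  have hc : ∀ i ∈ P.filter (fun i => C.1 i ∈ Q), Crosses C i x := by
    intro i hi; rw [mem_filter] at hi; exact crosses_symm C _ _ (hs i hi.1 _ hi.2)
  refine le_trans ?_ (coin1 (P.filter fun i => C.1 i ∈ Q) (fun i => kap C i x)
    (fun u => decide (chordRep C u ≤ chordRep C x)) ?_)
  · refine Nat.cast_le.2 (card_le_card ?_)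
    intro b hb
    rw [mem_filter] at hb
    refine (@Finset.mem_filter _ _ (_) _ _).2 ⟨mem_univ _, fun e he => ?_⟩
    rw [← over_iff C b e x (hc e he)]
    rw [mem_filter] at he
    exact hb.2 e he.1 he.2
  · intro i hi j hj h
    have := crosses_rep_ne C i x (hc i hi)
    have := crosses_rep_ne C j x (hc j hj)
    apply rep_injOn C P Q hPQ i j hi hj
    rcases kap_inj C _ _ _ _ h with h | h
    · exact h.1
    · exact absurd h.1 (by assumption)

lemma countA {n : ℕ} (C : ChordDiagram n) (x u : Fin (2*n)) (hux : u ≠ x) (hux' : u ≠ C.1 x)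
    (P Q : Finset (Fin (2*n)))
    (hPQ : Disjoint P Q) (hs : ∀ i ∈ P, ∀ j ∈ Q, Sepa x (C.1 x) i j)
    (hs' : ∀ i ∈ P, ∀ j ∈ Q, Sepa u (C.1 u) i j) :
    ((univ.filter fun b : Fin (2*n) → Fin (2*n) → Bool =>
      ∀ i ∈ P, C.1 i ∈ Q → ¬ (OverD (C, b) x i ∧ OverD (C, b) i u)).card : ℝ) ≤
      (3/4) ^ (P.filter fun i => C.1 i ∈ Q).card *
        Fintype.card (Fin (2*n) → Fin (2*n) → Bool) := by
  have hc : ∀ i ∈ P.filter (fun i => C.1 i ∈ Q), Crosses C x i := by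
    intro i hi; rw [mem_filter] at hi; exact hs i hi.1 _ hi.2
  have hc' : ∀ i ∈ P.filter (fun i => C.1 i ∈ Q), Crosses C i u := by
    intro i hi; rw [mem_filter] at hi; exact crosses_symm C _ _ (hs' i hi.1 _ hi.2)
  have hxu : chordRep C x ≠ chordRep C u := fun h => by
    rcases rep_eq C x u h with h | h
    · exact hux h
    · exact hux' h
  refine le_trans ?_ (coin2 (P.filter fun i => C.1 i ∈ Q) (kap C x) (fun i => kap C i u)
    (fun i => decide (chordRep C x ≤ chordRep C i))
    (fun i => decide (chordRep C i ≤ chordRep C u)) ?_ ?_ ?_)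
  · refine Nat.cast_le.2 (card_le_card ?_)
    intro b hb
    rw [mem_filter] at hb
    refine (@Finset.mem_filter _ _ (_) _ _).2 ⟨mem_univ _, fun e he => ?_⟩
    rw [← over_iff C b e u (hc' e he), ← over_iff C b x e (hc e he)]
    rw [mem_filter] at he
    exact hb.2 e he.1 he.2
  · intro i hi j hj h
    have := crosses_rep_ne C x i (hc i hi)
    have := crosses_rep_ne C x j (hc j hj)
    apply rep_injOn C P Q hPQ i j hi hj
    rcases kap_inj C _ _ _ _ h with h | h
    · exact h.2
    · exact absurd h.1 (by assumption)
  · intro i hi j hj h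
    have := crosses_rep_ne C i u (hc' i hi)
    have := crosses_rep_ne C j u (hc' j hj)
    apply rep_injOn C P Q hPQ i j hi hj
    rcases kap_inj C _ _ _ _ h with h | h
    · exact h.1
    · exact absurd h.1 (by assumption)
  · intro i hi j hj h
    have h1 := crosses_rep_ne C x j (hc j hj)
    rcases kap_inj C _ _ _ _ h with h | h
    · exact h1 h.1
    · exact hxu h.1

lemma card_near (n m : ℕ) (x : Fin (2*n)) :
    (univ.filter fun i : Fin (2*n) => cdi (2*n) i x ≤ m).card ≤ 4*m+4 := by
  have h1 : (univ.filter fun i : Fin (2*n) => cdi (2*n) i x ≤ m).card =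
      ((univ.filter fun i : Fin (2*n) => cdi (2*n) i x ≤ m).image (fun i : Fin (2*n) => (i:ℕ))).card :=
    (card_image_of_injective _ Fin.val_injective).symm
  rw [h1]
  have h2 : (univ.filter fun i : Fin (2*n) => cdi (2*n) i x ≤ m).image (fun i : Fin (2*n) => (i:ℕ))
      ⊆ (Finset.Icc ((x:ℕ)-m) (x+m) ∪ Finset.Ico (x+2*n-m) (2*n)) ∪ Finset.range (x+m+1-2*n) := by
    intro j hj
    simp only [mem_image, mem_filter, mem_univ, true_and] at hj
    obtain ⟨i, hi, rfl⟩ := hj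
    have := i.2
    have := x.2
    simp only [mem_union, mem_Icc, mem_Ico, mem_range]
    simp only [cdi] at hi
    omega
  refine (card_le_card h2).trans ((card_union_le _ _).trans ?_)
  have h3 := card_union_le (Finset.Icc ((x:ℕ)-m) (x+m)) (Finset.Ico (x+2*n-m) (2*n))
  have := x.2
  rw [Nat.card_Icc, Nat.card_Ico] at h3
  rw [card_range]
  omega

lemma card_between (n L : ℕ) (x y : Fin (2*n)) (h : L + 1 ≤ cdi (2*n) x y) :
    L ≤ (univ.filter fun i => Between x y i).card ∧
    L ≤ (univ.filter fun i => ¬ Between x y i).card := by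
  have h1 : (univ.filter fun i => Between x y i) = Finset.Ioo (min x y) (max x y) := by
    ext i; simp [Between]
  have h2 := card_filter_add_card_filter_not (s := (univ : Finset (Fin (2*n)))) (fun i => Between x y i)
  rw [card_univ, Fintype.card_fin] at h2
  have h3 : (univ.filter fun i => Between x y i).card = max (x:ℕ) y - min (x:ℕ) y - 1 := by
    rw [h1, Fin.card_Ioo]; simp
  have := x.2
  have := y.2
  simp only [cdi] at h
  omega

lemma quad {β : Type*} (U : Finset β) (X Y : β → Prop) :
    ((U.filter fun i => X i).card =
      (U.filter fun i => X i ∧ Y i).card + (U.filter fun i => X i ∧ ¬ Y i).card) ∧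
    ((U.filter fun i => ¬ X i).card =
      (U.filter fun i => ¬ X i ∧ Y i).card + (U.filter fun i => ¬ X i ∧ ¬ Y i).card) ∧
    ((U.filter fun i => Y i).card =
      (U.filter fun i => X i ∧ Y i).card + (U.filter fun i => ¬ X i ∧ Y i).card) ∧
    ((U.filter fun i => ¬ Y i).card =
      (U.filter fun i => X i ∧ ¬ Y i).card + (U.filter fun i => ¬ X i ∧ ¬ Y i).card) := by
  have h1 := card_filter_add_card_filter_not (s := U.filter fun i => X i) Y
  have h2 := card_filter_add_card_filter_not (s := U.filter fun i => ¬ X i) Y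
  have h3 := card_filter_add_card_filter_not (s := U.filter fun i => Y i) X
  have h4 := card_filter_add_card_filter_not (s := U.filter fun i => ¬ Y i) X
  simp only [filter_filter] at h1 h2 h3 h4
  simp only [and_comm (a := Y _), and_comm (a := ¬ Y _)] at h3 h4
  refine ⟨h1.symm, h2.symm, h3.symm, h4.symm⟩

lemma cdi_sep (N m i j x y : ℕ) (h1 : i < N) (h2 : j < N) (h3 : x < N) (h4 : y < N)
    (hx : m < cdi N i x) (hy : m < cdi N i y)
    (hs : ((x < i ∧ i < y ∨ y < i ∧ i < x) ∧ ¬(x < j ∧ j < y ∨ y < j ∧ j < x)) ∨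
      ((x < j ∧ j < y ∨ y < j ∧ j < x) ∧ ¬(x < i ∧ i < y ∨ y < i ∧ i < x))) :
    m + 1 ≤ cdi N i j := by
  simp only [cdi] at *
  omega

lemma setsA (n m L h : ℕ) (hL : 2*h + 8*m + 8 ≤ L) (x y u v : Fin (2*n))
    (hxy : L + 1 ≤ cdi (2*n) x y) (huv : L + 1 ≤ cdi (2*n) u v) :
    ∃ P Q : Finset (Fin (2*n)), Disjoint P Q ∧ h ≤ P.card ∧ h ≤ Q.card ∧
      (∀ i ∈ P, ∀ j ∈ Q, Sepa x y i j ∧ Sepa u v i j ∧ m + 1 ≤ cdi (2*n) i j) := by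
  set U : Finset (Fin (2*n)) := univ.filter fun i => m < cdi (2*n) i x ∧ m < cdi (2*n) i y with hU
  have hbd : ∀ q : Fin (2*n) → Prop, (univ.filter q).card ≤ (U.filter q).card + (8*m+8) := by
    intro q
    have hsub : univ.filter q ⊆ (U.filter q ∪ univ.filter fun i : Fin (2*n) => cdi (2*n) i x ≤ m)
        ∪ univ.filter fun i : Fin (2*n) => cdi (2*n) i y ≤ m := by
      intro i hi
      simp only [hU, mem_union, mem_filter, mem_univ, true_and] at hi ⊢
      by_cases h1 : cdi (2*n) i x ≤ m
      · simp [h1]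
      by_cases h2 : cdi (2*n) i y ≤ m
      · simp [h2]
      simp [hi, not_le.1 h1, not_le.1 h2]
    have h1 := card_le_card hsub
    have h2 := card_union_le (U.filter q ∪ univ.filter fun i : Fin (2*n) => cdi (2*n) i x ≤ m)
      (univ.filter fun i : Fin (2*n) => cdi (2*n) i y ≤ m)
    have h3 := card_union_le (U.filter q) (univ.filter fun i : Fin (2*n) => cdi (2*n) i x ≤ m)
    have h4 := card_near n m x
    have h5 := card_near n m y
    omega
  obtain ⟨a1, a2⟩ := card_between n L x y hxy
  obtain ⟨b1, b2⟩ := card_between n L u v huv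
  have c1 : (univ.filter fun i => Between x y i).card ≤
    (U.filter fun i => Between x y i).card + (8*m+8) := by convert hbd _
  have c2 : (univ.filter fun i => ¬ Between x y i).card ≤
    (U.filter fun i => ¬ Between x y i).card + (8*m+8) := by convert hbd _
  have c3 : (univ.filter fun i => Between u v i).card ≤
    (U.filter fun i => Between u v i).card + (8*m+8) := by convert hbd _
  have c4 : (univ.filter fun i => ¬ Between u v i).card ≤
    (U.filter fun i => ¬ Between u v i).card + (8*m+8) := by convert hbd _
  obtain ⟨q1, q2, q3, q4⟩ := quad U (fun i => Between x y i) (fun i => Between u v i)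
  have hcd : ∀ i j : Fin (2*n), i ∈ U → Sepa x y i j → m + 1 ≤ cdi (2*n) i j := by
    intro i j hi hs
    simp only [hU, mem_filter, mem_univ, true_and] at hi
    simp only [Sepa, between_iff, xo_iff] at hs
    exact cdi_sep _ _ _ _ _ _ i.2 j.2 x.2 y.2 hi.1 hi.2 hs
  by_cases hcase : h ≤ (U.filter fun i => Between x y i ∧ Between u v i).card ∧
      h ≤ (U.filter fun i => ¬ Between x y i ∧ ¬ Between u v i).card
  · refine ⟨_, _, ?_, hcase.1, hcase.2, ?_⟩
    · rw [disjoint_left]; intro i hi hj; rw [mem_filter] at hi hj; exact hj.2.1 hi.2.1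
    · intro i hi j hj
      rw [mem_filter] at hi hj
      have : Sepa x y i j := Or.inl ⟨hi.2.1, hj.2.1⟩
      exact ⟨this, Or.inl ⟨hi.2.2, hj.2.2⟩, hcd i j hi.1 this⟩
  · have hcase' : h ≤ (U.filter fun i => Between x y i ∧ ¬ Between u v i).card ∧
        h ≤ (U.filter fun i => ¬ Between x y i ∧ Between u v i).card := by
      omega
    refine ⟨_, _, ?_, hcase'.1, hcase'.2, ?_⟩
    · rw [disjoint_left]; intro i hi hj; rw [mem_filter] at hi hj; exact hj.2.1 hi.2.1
    · intro i hi j hj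
      rw [mem_filter] at hi hj
      have : Sepa x y i j := Or.inl ⟨hi.2.1, hj.2.1⟩
      exact ⟨this, Or.inr ⟨hj.2.2, hi.2.2⟩, hcd i j hi.1 this⟩

lemma setsB (n m L : ℕ) (hm : m < L) (hL : 4 * L < n) (x : Fin (2*n)) :
    ∃ P Q : Finset (Fin (2*n)), Disjoint P Q ∧ P.card = m ∧ 2*n ≤ Q.card + (8*L+4) ∧
      ∀ y : Fin (2*n), (∃ k, m + 1 ≤ k ∧ k ≤ L ∧ ((y:ℕ) = x + k ∨ (y:ℕ) + 2*n = x + k)) →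
      (∀ i ∈ P, ∀ j ∈ Q, Sepa x y i j ∧ L + 1 ≤ cdi (2*n) i j) := by
  have hx := x.2
  have hn : 0 < 2*n := by omega
  let g : ℕ → Fin (2*n) := fun t => ⟨(x + t + 1) % (2*n), Nat.mod_lt _ hn⟩
  have hg : ∀ t < m, ((g t : ℕ) = x + t + 1 ∧ (x:ℕ) + t + 1 < 2*n) ∨
      ((g t : ℕ) + 2*n = x + t + 1 ∧ 2*n ≤ (x:ℕ)+t+1) := by
    intro t ht
    simp only [g]
    by_cases h : (x:ℕ) + t + 1 < 2*n
    · left; exact ⟨Nat.mod_eq_of_lt h, h⟩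
    · right
      rw [Nat.mod_eq_sub_mod (by omega), Nat.mod_eq_of_lt (by omega)]
      omega
  refine ⟨(Finset.range m).image g, univ.filter fun i => 2*L < cdi (2*n) i x, ?_, ?_, ?_, ?_⟩
  · rw [disjoint_left]
    intro i hi hj
    simp only [mem_image, mem_range, mem_filter, mem_univ, true_and] at hi hj
    obtain ⟨t, ht, rfl⟩ := hi
    have := hg t ht
    have := (g t).2
    simp only [cdi] at hj
    omega
  · rw [card_image_of_injOn, card_range]
    intro s hs t ht hst
    simp only [coe_range, Set.mem_Iio] at hs ht
    have h1 := hg s hs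
    have h2 := hg t ht
    have h3 : (g s : ℕ) = g t := by rw [hst]
    omega
  · have h1 := card_near n (2*L) x
    have h2 := card_filter_add_card_filter_not (s := (univ : Finset (Fin (2*n))))
      (fun i => cdi (2*n) i x ≤ 2*L)
    rw [card_univ, Fintype.card_fin] at h2
    simp only [not_le] at h2
    omega
  · rintro y ⟨k, hk1, hk2, hk3⟩ i hi j hj
    simp only [mem_image, mem_range, mem_filter, mem_univ, true_and] at hi hj
    obtain ⟨t, ht, rfl⟩ := hi
    have h1 := hg t ht
    have h2 := (g t).2
    have h3 := j.2
    have h4 := y.2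
    simp only [Sepa, between_iff, xo_iff]
    simp only [cdi] at hj ⊢
    constructor <;> omega

lemma detConn {n : ℕ} (D : OrientedChordDiagram n) (m L : ℕ) (hmL : m ≤ L)
    (hG : ∃ i j, L ≤ chordLength D.1 i ∧ L ≤ chordLength D.1 j ∧ j ≠ i ∧ j ≠ D.1.1 i)
    (hB1 : ∀ c, m ≤ chordLength D.1 c → chordLength D.1 c < L →
      ∃ e, L ≤ chordLength D.1 e ∧ OverD D c e)
    (hB2 : ∀ c, m ≤ chordLength D.1 c → chordLength D.1 c < L →
      ∃ e, L ≤ chordLength D.1 e ∧ OverD D e c)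
    (hA : ∀ x u, L ≤ chordLength D.1 x → L ≤ chordLength D.1 u → u ≠ x → u ≠ D.1.1 x →
      ∃ e, m ≤ chordLength D.1 e ∧ OverD D x e ∧ OverD D e u) :
    StronglyConnectedIn D {x | m ≤ chordLength D.1 x} := by
  have hA' : ∀ x u, L ≤ chordLength D.1 x → L ≤ chordLength D.1 u → u ≠ x → u ≠ D.1.1 x →
      Relation.ReflTransGen (fun a b => a ∈ {x | m ≤ chordLength D.1 x} ∧
        b ∈ {x | m ≤ chordLength D.1 x} ∧ OverD D a b) x u := by
    intro x u hx hu h1 h2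
    obtain ⟨e, he, h3, h4⟩ := hA x u hx hu h1 h2
    exact (Relation.ReflTransGen.single ⟨hmL.trans hx, he, h3⟩).tail ⟨he, hmL.trans hu, h4⟩
  have hz : ∀ x, ∃ z, L ≤ chordLength D.1 z ∧ z ≠ x ∧ z ≠ D.1.1 x := by
    intro x
    obtain ⟨i, j, hi, hj, h1, h2⟩ := hG
    by_cases h : i = x ∨ i = D.1.1 x
    · refine ⟨j, hj, ?_⟩
      rcases h with rfl | rfl
      · exact ⟨h1, h2⟩
      · rw [D.1.2.1] at h2
        exact ⟨h2, h1⟩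
    · push Not at h
      exact ⟨i, hi, h⟩
  have hLL : ∀ x u, L ≤ chordLength D.1 x → L ≤ chordLength D.1 u →
      Relation.ReflTransGen (fun a b => a ∈ {x | m ≤ chordLength D.1 x} ∧
        b ∈ {x | m ≤ chordLength D.1 x} ∧ OverD D a b) x u := by
    intro x u hx hu
    by_cases h : u ≠ x ∧ u ≠ D.1.1 x
    · exact hA' x u hx hu h.1 h.2
    · obtain ⟨z, hz1, hz2, hz3⟩ := hz x
      refine (hA' x z hx hz1 hz2 hz3).trans (hA' z u hz1 hu ?_ ?_)
      · rintro rfl; exact h ⟨hz2, hz3⟩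
      · intro e
        apply h
        constructor
        · rintro rfl; exact hz3 (by rw [e, D.1.2.1])
        · intro e'
          rw [e'] at e
          exact hz2 (by rw [← D.1.2.1 x, e, D.1.2.1])
  intro c hc d hd
  have h1 : ∃ e, L ≤ chordLength D.1 e ∧ Relation.ReflTransGen
      (fun a b => a ∈ {x | m ≤ chordLength D.1 x} ∧
        b ∈ {x | m ≤ chordLength D.1 x} ∧ OverD D a b) c e := by
    by_cases h : L ≤ chordLength D.1 c
    · exact ⟨c, h, Relation.ReflTransGen.refl⟩
    · obtain ⟨e, he, ho⟩ := hB1 c hc (not_le.1 h)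
      exact ⟨e, he, Relation.ReflTransGen.single ⟨hc, hmL.trans he, ho⟩⟩
  have h2 : ∃ e, L ≤ chordLength D.1 e ∧ Relation.ReflTransGen
      (fun a b => a ∈ {x | m ≤ chordLength D.1 x} ∧
        b ∈ {x | m ≤ chordLength D.1 x} ∧ OverD D a b) e d := by
    by_cases h : L ≤ chordLength D.1 d
    · exact ⟨d, h, Relation.ReflTransGen.refl⟩
    · obtain ⟨e, he, ho⟩ := hB2 d hd (not_le.1 h)
      exact ⟨e, he, Relation.ReflTransGen.single ⟨hmL.trans he, hd, ho⟩⟩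
  obtain ⟨e, he, p1⟩ := h1
  obtain ⟨e', he', p2⟩ := h2
  exact (p1.trans (hLL e e' he he')).trans p2

end geometry

section probability

lemma sum_CD (n : ℕ) (g : (Fin (2*n) → Fin (2*n)) → ℝ) :
    ∑ C : ChordDiagram n, g C.1 = ∑ f ∈ Mat (univ : Finset (Fin (2*n))), g f := by
  refine (Finset.sum_subtype _ (fun f => ?_) g).symm
  rw [mem_Mat]; simp

lemma card_CD (n : ℕ) : (Fintype.card (ChordDiagram n) : ℝ) = DF (2*n) := by
  have h := sum_CD n (fun _ => 1)
  rw [sum_const, sum_const, nsmul_eq_mul, nsmul_eq_mul, mul_one, mul_one] at h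
  rw [← card_Mat (2*n) (univ : Finset (Fin (2*n))) (by simp), ← h, card_univ]

lemma probD_nonneg (n : ℕ) (E : OrientedChordDiagram n → Prop) : 0 ≤ probD n E := by
  unfold probD; positivity

lemma probD_mono (n : ℕ) (E F : OrientedChordDiagram n → Prop) (h : ∀ D, E D → F D) :
    probD n E ≤ probD n F := by
  unfold probD
  refine div_le_div_of_nonneg_right (Nat.cast_le.2 (card_le_card fun D hD => ?_)) (by positivity)
  exact (@Finset.mem_filter _ _ (_) _ _).2 ⟨mem_univ _, h D ((@Finset.mem_filter _ _ (_) _ _).1 hD).2⟩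

lemma probD_or (n : ℕ) (E F : OrientedChordDiagram n → Prop) :
    probD n (fun D => E D ∨ F D) ≤ probD n E + probD n F := by
  unfold probD
  rw [← add_div]
  refine div_le_div_of_nonneg_right ?_ (by positivity)
  rw [← Nat.cast_add]
  refine Nat.cast_le.2 ((card_le_card fun D hD => ?_).trans (card_union_le _ _))
  rcases ((@Finset.mem_filter _ _ (_) _ _).1 hD).2 with h | h
  · exact mem_union_left _ ((@Finset.mem_filter _ _ (_) _ _).2 ⟨mem_univ _, h⟩)
  · exact mem_union_right _ ((@Finset.mem_filter _ _ (_) _ _).2 ⟨mem_univ _, h⟩)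

lemma probD_exists (n : ℕ) {ι : Type*} [Fintype ι] (E : ι → OrientedChordDiagram n → Prop) :
    probD n (fun D => ∃ i, E i D) ≤ ∑ i, probD n (E i) := by
  unfold probD
  rw [← sum_div]
  refine div_le_div_of_nonneg_right ?_ (by positivity)
  rw [← Nat.cast_sum]
  refine Nat.cast_le.2 ((card_le_card fun D hD => ?_).trans card_biUnion_le)
  obtain ⟨i, h⟩ := ((@Finset.mem_filter _ _ (_) _ _).1 hD).2
  exact mem_biUnion.2 ⟨i, mem_univ _, (@Finset.mem_filter _ _ (_) _ _).2 ⟨mem_univ _, h⟩⟩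

lemma probD_false (n : ℕ) : probD n (fun _ => False) = 0 := by
  simp [probD]

lemma cardO_pos (n : ℕ) : (0:ℝ) < ((univ : Finset (OrientedChordDiagram n)).card : ℝ) := by
  rw [card_univ, Fintype.card_prod]
  push_cast
  rw [card_CD]
  have := DF_pos n
  positivity

lemma probD_compl (n : ℕ) (E : OrientedChordDiagram n → Prop) :
    probD n E = 1 - probD n (fun D => ¬ E D) := by
  unfold probD
  have h := card_filter_add_card_filter_not (s := (univ : Finset (OrientedChordDiagram n))) E
  have hp := cardO_pos n
  field_simp
  rw [eq_sub_iff_add_eq, ← h]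
  push_cast
  congr!

lemma evt_bound (n : ℕ) (E : OrientedChordDiagram n → Prop) (θ ρ K : ℝ) (hK : 0 ≤ K)
    (hθ0 : 0 ≤ θ) (hρ0 : 1/2 ≤ ρ) (hρ1 : ρ ≤ 1) (P Q : Finset (Fin (2*n))) (hPQ : Disjoint P Q)
    (hcond : (1 - ρ) * (2*(n:ℝ) - 1) ≤ (1 - θ) * Q.card - ((P.card : ℝ) - 1))
    (hE : ∀ C : ChordDiagram n, ∃ F : Finset (Fin (2*n) → Fin (2*n) → Bool),
      (∀ b, E (C, b) → b ∈ F) ∧ (F.card : ℝ) ≤ K * θ ^ (P.filter fun i => C.1 i ∈ Q).card *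
        Fintype.card (Fin (2*n) → Fin (2*n) → Bool)) :
    probD n E ≤ K * ρ ^ P.card := by
  have hm := moment θ ρ hθ0 hρ0 hρ1 (2*n) univ P Q (by simp) (subset_univ _) (subset_univ _) hPQ
    (by push_cast; exact hcond)
  rw [← sum_CD n (fun f => θ ^ (P.filter fun i => f i ∈ Q).card), ← card_CD] at hm
  unfold probD
  rw [div_le_iff₀ (cardO_pos n)]
  have h1 : ((univ.filter E).card : ℝ) = ∑ C : ChordDiagram n, ((univ.filter fun b => E (C, b)).card : ℝ) := by
    rw [Finset.card_filter]
    push_cast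
    rw [Fintype.sum_prod_type]
    refine sum_congr rfl fun C _ => ?_
    rw [Finset.card_filter]
    push_cast
    rfl
  rw [h1, card_univ, Fintype.card_prod]
  push_cast
  refine (sum_le_sum fun C _ => (?_ : _ ≤ K * θ ^ (P.filter fun i => C.1 i ∈ Q).card *
        (Fintype.card (Fin (2*n) → Fin (2*n) → Bool) : ℝ))).trans ?_
  · obtain ⟨F, hF, hF2⟩ := hE C
    refine le_trans (Nat.cast_le.2 (card_le_card fun b hb => ?_)) hF2
    exact hF b ((@Finset.mem_filter _ _ (_) _ _).1 hb).2
  rw [← sum_mul, ← mul_sum]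
  have hw : (0:ℝ) ≤ (Fintype.card (Fin (2*n) → Fin (2*n) → Bool) : ℝ) := by positivity
  have := mul_le_mul_of_nonneg_right (mul_le_mul_of_nonneg_left hm hK) hw
  refine this.trans (le_of_eq ?_)
  push_cast
  ring

lemma evt_const {n : ℕ} (C : ChordDiagram n) (p : Prop) (P Q : Finset (Fin (2*n)))
    (h : p → (P.filter fun i => C.1 i ∈ Q).card ≤ 1) :
    ∃ F : Finset (Fin (2*n) → Fin (2*n) → Bool), (∀ b, p → b ∈ F) ∧ (F.card : ℝ) ≤
      2 * (1/2) ^ (P.filter fun i => C.1 i ∈ Q).card *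
        Fintype.card (Fin (2*n) → Fin (2*n) → Bool) := by
  by_cases hp : p
  · have h1 : (1:ℝ) ≤ 2 * (1/2) ^ (P.filter fun i => C.1 i ∈ Q).card := by
      have : (1/2:ℝ)^1 ≤ (1/2) ^ (P.filter fun i => C.1 i ∈ Q).card :=
        pow_le_pow_of_le_one (by norm_num) (by norm_num) (h hp)
      linarith
    refine ⟨univ, fun b _ => mem_univ b, le_trans ?_ (le_mul_of_one_le_left (by positivity) h1)⟩
    exact_mod_cast card_le_univ _
  · refine ⟨∅, fun b h => absurd h hp, ?_⟩
    rw [card_empty, Nat.cast_zero]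
    positivity

lemma boundG (n L : ℕ) (hn : 100 ≤ n) (hL : 4 * L + 4 ≤ n) :
    probD n (fun D => ¬ ∃ i j, L ≤ chordLength D.1 i ∧ L ≤ chordLength D.1 j ∧ j ≠ i ∧ j ≠ D.1.1 i)
      ≤ 2 * (31/32 : ℝ) ^ (n/8) := by
  set P : Finset (Fin (2*n)) := univ.filter fun i => (i:ℕ) < n/8 with hP
  set Q : Finset (Fin (2*n)) := univ.filter fun i => n ≤ (i:ℕ) ∧ (i:ℕ) < n + n/2 with hQ
  have hPc : P.card = n/8 := by
    have h1 : P.card = (P.image (fun i : Fin (2*n) => (i:ℕ))).card :=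
      (card_image_of_injective _ Fin.val_injective).symm
    have h2 : P.image (fun i : Fin (2*n) => (i:ℕ)) = Finset.range (n/8) := by
      ext j; simp only [hP, mem_image, mem_filter, mem_univ, true_and, mem_range]
      constructor
      · rintro ⟨i, hi, rfl⟩; exact hi
      · intro hj; exact ⟨⟨j, by omega⟩, hj, rfl⟩
    rw [h1, h2, card_range]
  have hQc : Q.card = n/2 := by
    have h1 : Q.card = (Q.image (fun i : Fin (2*n) => (i:ℕ))).card :=
      (card_image_of_injective _ Fin.val_injective).symm
    have h2 : Q.image (fun i : Fin (2*n) => (i:ℕ)) = Finset.Ico n (n+n/2) := by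
      ext j; simp only [hQ, mem_image, mem_filter, mem_univ, true_and, mem_Ico]
      constructor
      · rintro ⟨i, hi, rfl⟩; exact hi
      · intro hj; exact ⟨⟨j, by omega⟩, hj, rfl⟩
    rw [h1, h2, Nat.card_Ico]; omega
  have hdis : Disjoint P Q := by
    rw [disjoint_left]; intro i hi hj
    simp only [hP, hQ, mem_filter, mem_univ, true_and] at hi hj
    omega
  rw [← hPc]
  refine evt_bound n _ (1/2) (31/32) 2 (by norm_num) (by norm_num) (by norm_num) (by norm_num)
    P Q hdis ?_ ?_
  · rw [hPc, hQc]
    have h1 : ((n/8 : ℕ) : ℝ) ≤ n/8 := Nat.cast_div_le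
    have h2 : (n:ℝ) ≤ 2 * ((n/2 : ℕ):ℝ) + 1 := by exact_mod_cast (by omega : n ≤ 2 * (n/2) + 1)
    have h3 : (100:ℝ) ≤ n := by exact_mod_cast hn
    linarith
  · intro C
    refine evt_const C (¬ ∃ i j, L ≤ chordLength C i ∧ L ≤ chordLength C j ∧ j ≠ i ∧ j ≠ C.1 i) P Q ?_
    intro hno
    by_contra hgt
    rw [not_le, one_lt_card] at hgt
    obtain ⟨i, hi, j, hj, hij⟩ := hgt
    have hlen : ∀ i ∈ P.filter (fun i => C.1 i ∈ Q), L ≤ chordLength C i := by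
      intro i hi
      simp only [hP, hQ, mem_filter, mem_univ, true_and] at hi
      rw [len_iff]
      simp only [cdi]
      omega
    refine hno ⟨i, j, hlen i hi, hlen j hj, hij.symm, ?_⟩
    rintro rfl
    rw [mem_filter] at hi hj
    exact disjoint_left.1 hdis hj.1 hi.2

/-- `y` is reached from `x` clockwise in `k` steps, with `m < k ≤ L`. -/
def Cwise {n : ℕ} (m L : ℕ) (x y : Fin (2*n)) : Prop :=
  ∃ k, m + 1 ≤ k ∧ k ≤ L ∧ ((y:ℕ) = x + k ∨ (y:ℕ) + 2*n = x + k)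

lemma boundB (n m L : ℕ) (hm : m < L) (hL : 40 * L ≤ n) (hmn : 10 * m + 20 ≤ n) (hn : 1 ≤ n) (x : Fin (2*n)) :
    probD n (fun D => Cwise m L x (D.1.1 x) ∧ ¬ ∃ e, L ≤ chordLength D.1 e ∧ OverD D x e)
      ≤ (3/5 : ℝ) ^ m ∧
    probD n (fun D => Cwise m L x (D.1.1 x) ∧ ¬ ∃ e, L ≤ chordLength D.1 e ∧ OverD D e x)
      ≤ (3/5 : ℝ) ^ m := by
  obtain ⟨P, Q, hdis, hPc, hQc, hs⟩ := setsB n m L hm (by omega) x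
  have hcond : (1 - (3/5:ℝ)) * (2*(n:ℝ) - 1) ≤ (1 - 1/2) * Q.card - ((P.card : ℝ) - 1) := by
    rw [hPc]
    have h1 : 2*(n:ℝ) ≤ Q.card + (8*L+4) := by exact_mod_cast hQc
    have h2 : 40*(L:ℝ) ≤ n := by exact_mod_cast hL
    have h3 : 10*(m:ℝ) + 20 ≤ n := by exact_mod_cast hmn
    linarith
  have hlen : ∀ C : ChordDiagram n, Cwise m L x (C.1 x) → ∀ i ∈ P, C.1 i ∈ Q → L ≤ chordLength C i := by
    intro C hC i hi hj
    rw [len_iff]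
    exact (hs _ hC i hi _ hj).2
  constructor
  · have := evt_bound n (fun D => Cwise m L x (D.1.1 x) ∧ ¬ ∃ e, L ≤ chordLength D.1 e ∧ OverD D x e)
      (1/2) (3/5) 1 (by norm_num) (by norm_num) (by norm_num) (by norm_num)
      P Q hdis hcond (by
        intro C
        by_cases hC : Cwise m L x (C.1 x)
        · rw [one_mul]
          refine ⟨_, fun b hb => ?_,
            countB C x P Q hdis fun i hi j hj => (hs _ hC i hi j hj).1⟩
          refine (@Finset.mem_filter _ _ (_) _ _).2
            ⟨mem_univ _, fun i hi hj ho => hb.2 ⟨i, hlen C hC i hi hj, ho⟩⟩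
        · refine ⟨∅, fun b h => absurd h.1 hC, ?_⟩
          rw [card_empty, Nat.cast_zero]
          positivity)
    rwa [one_mul, hPc] at this
  · have := evt_bound n (fun D => Cwise m L x (D.1.1 x) ∧ ¬ ∃ e, L ≤ chordLength D.1 e ∧ OverD D e x)
      (1/2) (3/5) 1 (by norm_num) (by norm_num) (by norm_num) (by norm_num)
      P Q hdis hcond (by
        intro C
        by_cases hC : Cwise m L x (C.1 x)
        · rw [one_mul]
          refine ⟨_, fun b hb => ?_,
            countB' C x P Q hdis fun i hi j hj => (hs _ hC i hi j hj).1⟩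
          refine (@Finset.mem_filter _ _ (_) _ _).2
            ⟨mem_univ _, fun i hi hj ho => hb.2 ⟨i, hlen C hC i hi hj, ho⟩⟩
        · refine ⟨∅, fun b h => absurd h.1 hC, ?_⟩
          rw [card_empty, Nat.cast_zero]
          positivity)
    rwa [one_mul, hPc] at this

lemma boundA (n m L : ℕ) (hL : n ≤ 40 * L + 40) (hmn : 8 * m + 8 + 2 * (n/200) ≤ L)
    (x y u v : Fin (2*n)) :
    probD n (fun D => D.1.1 x = y ∧ D.1.1 u = v ∧ L ≤ chordLength D.1 x ∧ L ≤ chordLength D.1 u ∧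
      u ≠ x ∧ u ≠ y ∧ ¬ ∃ e, m ≤ chordLength D.1 e ∧ OverD D x e ∧ OverD D e u)
      ≤ (3199/3200 : ℝ) ^ (n/1600) := by
  by_cases hcd : L + 1 ≤ cdi (2*n) x y ∧ L + 1 ≤ cdi (2*n) u v ∧ u ≠ x ∧ u ≠ y
  swap
  · refine le_trans (probD_mono n _ (fun _ => False) ?_) (by rw [probD_false]; positivity)
    rintro D ⟨h1, h2, h3, h4, h5, h6, -⟩
    rw [len_iff] at h3 h4
    rw [h1] at h3
    rw [h2] at h4
    exact hcd ⟨h3, h4, h5, h6⟩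
  obtain ⟨hxy, huv, hux, huy⟩ := hcd
  obtain ⟨P', Q, hdis', hP', hQ, hs'⟩ := setsA n m L (n/200) (by omega) x y u v hxy huv
  obtain ⟨P, hPP', hPc⟩ := exists_subset_card_eq (s := P') (n := n/1600) (by omega)
  have hdis : Disjoint P Q := Disjoint.mono_left hPP' hdis'
  have hs := fun i (hi : i ∈ P) => hs' i (hPP' hi)
  have := evt_bound n (fun D => D.1.1 x = y ∧ D.1.1 u = v ∧ L ≤ chordLength D.1 x ∧ L ≤ chordLength D.1 u ∧
      u ≠ x ∧ u ≠ y ∧ ¬ ∃ e, m ≤ chordLength D.1 e ∧ OverD D x e ∧ OverD D e u)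
      (3/4) (3199/3200) 1 (by norm_num) (by norm_num) (by norm_num) (by norm_num)
      P Q hdis (by
        rw [hPc]
        have h1 : ((n/1600 : ℕ) : ℝ) ≤ n/1600 := Nat.cast_div_le
        have h2 : (n:ℝ) ≤ 200 * ((n/200 : ℕ):ℝ) + 199 := by
          exact_mod_cast (by omega : n ≤ 200 * (n/200) + 199)
        have h3 : ((n/200 : ℕ):ℝ) ≤ Q.card := by exact_mod_cast hQ
        linarith) (by
        intro C
        by_cases hC : C.1 x = y ∧ C.1 u = v
        · rw [one_mul]
          refine ⟨_, fun b hb => ?_,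
            countA C x u hux (by rw [hC.1]; exact huy) P Q hdis
              (fun i hi j hj => by rw [hC.1]; exact (hs i hi j hj).1)
              (fun i hi j hj => by rw [hC.2]; exact (hs i hi j hj).2.1)⟩
          obtain ⟨-, -, -, -, -, -, hb⟩ := hb
          refine (@Finset.mem_filter _ _ (_) _ _).2
            ⟨mem_univ _, fun i hi hj ho => hb ⟨i, ?_, ho⟩⟩
          rw [len_iff]
          exact (hs i hi _ hj).2.2
        · refine ⟨∅, fun b h => absurd ⟨h.1, h.2.1⟩ hC, ?_⟩
          rw [card_empty, Nat.cast_zero]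
          positivity)
  rwa [one_mul, hPc] at this

lemma cwise_or {n : ℕ} (C : ChordDiagram n) (m L : ℕ) (c : Fin (2*n))
    (h1 : m ≤ chordLength C c) (h2 : chordLength C c < L) :
    Cwise m L c (C.1 c) ∨ Cwise m L (C.1 c) (C.1 (C.1 c)) := by
  rw [len_iff] at h1
  rw [← not_le, len_iff, not_le] at h2
  have := c.2
  have := (C.1 c).2
  rw [C.2.1]
  simp only [Cwise]
  simp only [cdi] at h1 h2
  by_cases ha : (c:ℕ) ≤ C.1 c <;> by_cases hb : 2 * (max (c:ℕ) (C.1 c) - min (c:ℕ) (C.1 c)) ≤ 2*n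
  · left; exact ⟨C.1 c - c, by omega, by omega, by omega⟩
  · right; exact ⟨2*n - (C.1 c - c), by omega, by omega, by omega⟩
  · right; exact ⟨c - C.1 c, by omega, by omega, by omega⟩
  · left; exact ⟨2*n - (c - C.1 c), by omega, by omega, by omega⟩

lemma bound_all (n m : ℕ) (hn : 1000 ≤ n) (hmn : 1000 * m + 100000 ≤ n) :
    probD n (fun D => ¬ StronglyConnectedIn D {x | m ≤ chordLength D.1 x}) ≤
      2 * (31/32 : ℝ) ^ (n/8) + (2*n) * (3/5 : ℝ) ^ m + (2*n) * (3/5 : ℝ) ^ m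
        + (2*n)^4 * (3199/3200 : ℝ) ^ (n/1600) := by
  set L := n/40 with hLdef
  have hmL : m < L := by omega
  let EG : OrientedChordDiagram n → Prop := fun D =>
    ¬ ∃ i j, L ≤ chordLength D.1 i ∧ L ≤ chordLength D.1 j ∧ j ≠ i ∧ j ≠ D.1.1 i
  let E1 : Fin (2*n) → OrientedChordDiagram n → Prop := fun x D =>
    Cwise m L x (D.1.1 x) ∧ ¬ ∃ e, L ≤ chordLength D.1 e ∧ OverD D x e
  let E2 : Fin (2*n) → OrientedChordDiagram n → Prop := fun x D =>
    Cwise m L x (D.1.1 x) ∧ ¬ ∃ e, L ≤ chordLength D.1 e ∧ OverD D e x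
  let EA : (Fin (2*n) × Fin (2*n)) × (Fin (2*n) × Fin (2*n)) → OrientedChordDiagram n → Prop :=
    fun q D => D.1.1 q.1.1 = q.1.2 ∧ D.1.1 q.2.1 = q.2.2 ∧ L ≤ chordLength D.1 q.1.1 ∧
      L ≤ chordLength D.1 q.2.1 ∧ q.2.1 ≠ q.1.1 ∧ q.2.1 ≠ q.1.2 ∧
      ¬ ∃ e, m ≤ chordLength D.1 e ∧ OverD D q.1.1 e ∧ OverD D e q.2.1
  have hsub : ∀ D, ¬ StronglyConnectedIn D {x | m ≤ chordLength D.1 x} →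
      ((EG D ∨ ∃ x, E1 x D) ∨ ∃ x, E2 x D) ∨ ∃ q, EA q D := by
    intro D hD
    by_contra hno
    push Not at hno
    obtain ⟨⟨⟨hG, h1⟩, h2⟩, hA⟩ := hno
    apply hD
    refine detConn D m L hmL.le (not_not.1 hG) ?_ ?_ ?_
    · intro c hc1 hc2
      rcases cwise_or D.1 m L c hc1 hc2 with h | h
      · by_contra hcon; exact h1 c ⟨h, hcon⟩
      · by_contra hcon
        refine h1 (D.1.1 c) ⟨h, ?_⟩
        simp only [over_left]
        exact hcon
    · intro c hc1 hc2
      rcases cwise_or D.1 m L c hc1 hc2 with h | h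
      · by_contra hcon; exact h2 c ⟨h, hcon⟩
      · by_contra hcon
        refine h2 (D.1.1 c) ⟨h, ?_⟩
        simp only [over_right]
        exact hcon
    · intro x u hx hu hux huy
      by_contra hcon
      exact hA ((x, D.1.1 x), (u, D.1.1 u)) ⟨rfl, rfl, hx, hu, hux, huy, hcon⟩
  refine (probD_mono n _ _ hsub).trans ?_
  refine (probD_or n _ _).trans ?_
  refine add_le_add ((probD_or n _ _).trans (add_le_add ((probD_or n _ _).trans
    (add_le_add ?_ ?_)) ?_)) ?_
  · exact boundG n L (by omega) (by omega)
  · refine (probD_exists n E1).trans ((sum_le_sum fun x _ =>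
      (boundB n m L hmL (by omega) (by omega) (by omega) x).1).trans ?_)
    rw [sum_const, card_univ, Fintype.card_fin, nsmul_eq_mul]
    push_cast; rfl
  · refine (probD_exists n E2).trans ((sum_le_sum fun x _ =>
      (boundB n m L hmL (by omega) (by omega) (by omega) x).2).trans ?_)
    rw [sum_const, card_univ, Fintype.card_fin, nsmul_eq_mul]
    push_cast; rfl
  · refine (probD_exists n EA).trans ((sum_le_sum fun q _ =>
      (boundA n m L (by omega) (by omega) q.1.1 q.1.2 q.2.1 q.2.2)).trans ?_)
    rw [sum_const, card_univ, Fintype.card_prod, Fintype.card_prod, Fintype.card_fin, nsmul_eq_mul]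
    push_cast
    apply le_of_eq
    ring

lemma tendsto_poly_pow (ρ : ℝ) (h0 : 0 < ρ) (h1 : ρ < 1) (k d : ℕ) (hd : 0 < d) :
    Tendsto (fun n : ℕ => (2*(n:ℝ))^k * ρ ^ (n/d)) atTop (nhds 0) := by
  have h2 : Tendsto (fun q : ℕ => (q:ℝ)^k * ρ ^ q) atTop (nhds 0) :=
    tendsto_pow_const_mul_const_pow_of_lt_one k h0.le h1
  have hdiv : Tendsto (fun n : ℕ => n / d) atTop atTop := Nat.tendsto_div_const_atTop hd.ne'
  have h3 := (h2.comp hdiv).const_mul ((4*(d:ℝ))^k)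
  rw [mul_zero] at h3
  refine squeeze_zero' (Eventually.of_forall fun n => by positivity) ?_ h3
  filter_upwards [eventually_ge_atTop d] with n hn
  simp only [Function.comp]
  rw [← mul_assoc, ← mul_pow]
  refine mul_le_mul_of_nonneg_right (pow_le_pow_left₀ (by positivity) ?_ k) (by positivity)
  have hq : 1 ≤ n / d := (Nat.one_le_div_iff hd).2 hn
  have := Nat.div_add_mod n d
  have := Nat.mod_lt n hd
  have h4 : n ≤ 2 * d * (n/d) := by nlinarith
  have : (n:ℝ) ≤ 2 * d * ((n/d : ℕ):ℝ) := by exact_mod_cast h4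
  linarith

lemma tendsto_log_pow :
    Tendsto (fun n : ℕ => (2*(n:ℝ)) * (3/5 : ℝ) ^ ⌈2 * Real.log n⌉₊) atTop (nhds 0) := by
  have hc : 1 + 2 * Real.log (3/5) < 0 := by
    have h : Real.log (9/25) < -1 := by
      rw [Real.log_lt_iff_lt_exp (by norm_num), Real.exp_neg]
      have h1 := Real.exp_one_lt_d9
      rw [lt_inv_comm₀ (by norm_num) (Real.exp_pos 1)]
      linarith
    have h2 : Real.log (9/25) = 2 * Real.log (3/5) := by
      rw [show (9/25:ℝ) = (3/5)^2 by norm_num, Real.log_pow]; norm_num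
    linarith
  have hl : Tendsto (fun n : ℕ => Real.log n) atTop atTop :=
    Real.tendsto_log_atTop.comp tendsto_natCast_atTop_atTop
  have h1 : Tendsto (fun n : ℕ => 2 * Real.exp ((1 + 2 * Real.log (3/5)) * Real.log n)) atTop (nhds 0) := by
    have := (Real.tendsto_exp_atBot.comp (hl.const_mul_atTop_of_neg hc)).const_mul 2
    simpa using this
  refine squeeze_zero' (Eventually.of_forall fun n => by positivity) ?_ h1
  filter_upwards [eventually_ge_atTop 1] with n hn
  have hn' : (0:ℝ) < n := by exact_mod_cast hn
  have h2 : (3/5 : ℝ) ^ ⌈2 * Real.log n⌉₊ ≤ Real.exp (2 * Real.log (3/5) * Real.log n) := by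
    rw [← Real.rpow_natCast, Real.rpow_def_of_pos (by norm_num)]
    apply Real.exp_le_exp.2
    have h3 := Nat.le_ceil (2 * Real.log n)
    have h4 : Real.log (3/5) ≤ 0 := Real.log_nonpos (by norm_num) (by norm_num)
    nlinarith
  have h3 : Real.exp ((1 + 2 * Real.log (3/5)) * Real.log n)
      = n * Real.exp (2 * Real.log (3/5) * Real.log n) := by
    rw [add_mul, one_mul, Real.exp_add, Real.exp_log hn']
  rw [h3, mul_assoc]
  gcongr

lemma eventually_ceil : ∀ᶠ n : ℕ in atTop, 1000 * ⌈2 * Real.log n⌉₊ + 100000 ≤ n := by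
  have h := (Real.isLittleO_log_id_atTop.comp_tendsto tendsto_natCast_atTop_atTop (k := fun n : ℕ => (n:ℝ)))
  have h2 := h.def (c := 1/4000) (by norm_num)
  filter_upwards [h2, eventually_ge_atTop 1000000] with n hn hn2
  simp only [Function.comp, id, Real.norm_eq_abs] at hn
  have h5 : (1000000:ℝ) ≤ n := by exact_mod_cast hn2
  have h3 : 0 ≤ Real.log n := Real.log_nonneg (by linarith)
  rw [abs_of_nonneg h3, abs_of_nonneg (by linarith)] at hn
  have h4 := Nat.ceil_lt_add_one (a := 2 * Real.log n) (by linarith)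
  have : (1000 * (⌈2 * Real.log n⌉₊:ℝ) + 100000) ≤ n := by linarith
  exact_mod_cast this

end probability


theorem stmt13 :
    Filter.Tendsto
      (fun n : ℕ => probD n (fun D =>
        StronglyConnectedIn D {x | 2 * Real.log n ≤ (chordLength D.1 x : ℝ)}))
      Filter.atTop (nhds 1) := by

  have hbad : Tendsto (fun n : ℕ => probD n (fun D =>
      ¬ StronglyConnectedIn D {x | 2 * Real.log n ≤ (chordLength D.1 x : ℝ)})) atTop (nhds 0) := by
    have hlim : Tendsto (fun n : ℕ => 2 * (31/32 : ℝ) ^ (n/8)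
        + (2*n) * (3/5 : ℝ) ^ ⌈2 * Real.log n⌉₊ + (2*n) * (3/5 : ℝ) ^ ⌈2 * Real.log n⌉₊
        + (2*n)^4 * (3199/3200 : ℝ) ^ (n/1600)) atTop (nhds 0) := by
      have t1 := (tendsto_poly_pow (31/32) (by norm_num) (by norm_num) 0 8 (by norm_num)).const_mul 2
      have t2 := tendsto_log_pow
      have t3 := tendsto_poly_pow (3199/3200) (by norm_num) (by norm_num) 4 1600 (by norm_num)
      have := ((t1.add t2).add t2).add t3
      simpa using this
    refine squeeze_zero' (Eventually.of_forall fun n => probD_nonneg n _) ?_ hlim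
    filter_upwards [eventually_ceil, eventually_ge_atTop 1000] with n h1 h2
    have := bound_all n ⌈2 * Real.log n⌉₊ h2 h1
    simpa only [Nat.ceil_le] using this
  have h := hbad.const_sub 1
  rw [sub_zero] at h
  exact h.congr fun n => (probD_compl n _).symm
end
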